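/- arXiv:1505.05446 — 7 statements merged into one kernel-verified Lean document; each statement's English description precedes it below -/
import Mathlib

section
/- Let S be a nonempty connected regular surface in ℝ³ satisfying property 𝒫. Then S is a Euclidean sphere: there exist a point c ∈ ℝ³ and a real number r > 0 such that S = {x ∈ ℝ³ | ‖x − c‖ = r}. -/
noncomputable section

open Module
open scoped RealInnerProductSpace

abbrev E3 : Type := EuclideanSpace ℝ (Fin 3)
abbrev E2 : Type := EuclideanSpace ℝ (Fin 2)

/-- `f : E2 → E3` restricted to the open set `U` is a local parametrization of the
surface `S` around the point `p`: it is smooth, has injective derivative at every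
point of `U`, and is a homeomorphism onto its image `f '' U`, which is an open
neighborhood of `p` in `S` for the subspace topology. -/
def IsChartAt (S : Set E3) (p : E3) (f : E2 → E3) (U : Set E2) : Prop :=
  IsOpen U ∧
  ContDiffOn ℝ (⊤ : ℕ∞) f U ∧
  (∀ u ∈ U, Function.Injective (fderiv ℝ f u)) ∧
  p ∈ f '' U ∧
  (∃ W : Set E3, IsOpen W ∧ f '' U = W ∩ S) ∧
  (∃ φ : U ≃ₜ (f '' U), ∀ u : U, (φ u : E3) = f u)

/-- A regular surface in ℝ³. -/
def IsRegularSurface (S : Set E3) : Prop :=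
  ∀ p ∈ S, ∃ f U, IsChartAt S p f U

/-- A plane: a 2-dimensional affine subspace of ℝ³. -/
def IsPlane (Pl : AffineSubspace ℝ E3) : Prop := finrank ℝ Pl.direction = 2

/-- A line: a 1-dimensional affine subspace of ℝ³. -/
def IsLine (L : AffineSubspace ℝ E3) : Prop := finrank ℝ L.direction = 1

/-- `C` is the circle in the plane `Pl` of center `c` and radius `r ≥ 0`. -/
def IsCircleIn (Pl : AffineSubspace ℝ E3) (c : E3) (r : ℝ) (C : Set E3) : Prop :=
  c ∈ Pl ∧ 0 ≤ r ∧ C = {x ∈ (Pl : Set E3) | ‖x - c‖ = r}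

/-- Property 𝒫: every plane meeting `S` meets it in a (possibly degenerate) circle. -/
def PropertyP (S : Set E3) : Prop :=
  ∀ Pl : AffineSubspace ℝ E3, IsPlane Pl → ((Pl : Set E3) ∩ S).Nonempty →
    ∃ c r, IsCircleIn Pl c r ((Pl : Set E3) ∩ S)

/-- The Minkowski bilinear form ⟨x, y⟩₁ = x₁y₁ + x₂y₂ − x₃y₃ on ℝ³. -/
def mink (x y : E3) : ℝ := x 0 * y 0 + x 1 * y 1 - x 2 * y 2

/-- A spacelike plane: a plane on whose direction the Minkowski form is positive definite. -/
def IsSpacelikePlane (Pl : AffineSubspace ℝ E3) : Prop :=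
  IsPlane Pl ∧ ∀ v ∈ Pl.direction, v ≠ 0 → 0 < mink v v

/-- `C` is the circle (for the Minkowski-induced metric) in the spacelike plane `Pl`
of center `c` and radius `r ≥ 0`. -/
def IsMCircleIn (Pl : AffineSubspace ℝ E3) (c : E3) (r : ℝ) (C : Set E3) : Prop :=
  c ∈ Pl ∧ 0 ≤ r ∧ C = {x ∈ (Pl : Set E3) | mink (x - c) (x - c) = r ^ 2}

/-- Property 𝒫*: every spacelike plane meeting `S` meets it in a (possibly degenerate) circle. -/
def PropertyPStar (S : Set E3) : Prop :=
  ∀ Pl : AffineSubspace ℝ E3, IsSpacelikePlane Pl → ((Pl : Set E3) ∩ S).Nonempty →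
    ∃ c r, IsMCircleIn Pl c r ((Pl : Set E3) ∩ S)

/-- The tangent plane associated to a parametrization `f` at the parameter `u`:
the image of the derivative of `f` at `u`. -/
def TangentPlane (f : E2 → E3) (u : E2) : Submodule ℝ E3 :=
  LinearMap.range (fderiv ℝ f u : E2 →ₗ[ℝ] E3)

/-- A spacelike regular surface in 𝕃³: a regular surface all of whose tangent planes are
2-dimensional subspaces on which the Minkowski form is positive definite. -/
def IsSpacelikeSurface (S : Set E3) : Prop :=
  ∀ p ∈ S, ∃ f U, IsChartAt S p f U ∧
    ∀ u ∈ U, f u = p →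
      finrank ℝ (TangentPlane f u) = 2 ∧
      ∀ v ∈ TangentPlane f u, v ≠ 0 → 0 < mink v v

lemma aux_plane (S : Set E3) (hP : PropertyP S) (m u v : E3) (hu : u ≠ 0) (hv : v ≠ 0)
    (huv : ⟪u, v⟫ = 0) (hp : m + v ∈ S) (hq : m - v ∈ S) :
    ∃ s : ℝ, ∀ t a : ℝ, (m + (t • u + a • v) ∈ S ↔
      t ^ 2 * ‖u‖ ^ 2 + a ^ 2 * ‖v‖ ^ 2 - 2 * t * s * ‖u‖ ^ 2 = ‖v‖ ^ 2) := by
  have hvu : ⟪v, u⟫ = 0 := by rw [real_inner_comm]; exact huv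
  have hV : 0 < ‖v‖ ^ 2 := by positivity
  have hli : LinearIndependent ℝ ![u, v] := by
    rw [LinearIndependent.pair_iff]
    intro a b hab
    have h1 : ⟪a • u + b • v, u⟫ = 0 := by rw [hab]; simp
    have h2 : ⟪a • u + b • v, v⟫ = 0 := by rw [hab]; simp
    rw [inner_add_left, real_inner_smul_left, real_inner_smul_left, hvu,
      real_inner_self_eq_norm_sq] at h1
    rw [inner_add_left, real_inner_smul_left, real_inner_smul_left, huv,
      real_inner_self_eq_norm_sq] at h2
    constructor
    · have : ‖u‖ ^ 2 ≠ 0 := by positivity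
      simpa [hu] using h1
    · simpa [hv] using h2
  have hmem : ∀ x : E3, x ∈ AffineSubspace.mk' m (Submodule.span ℝ {u, v}) ↔
      ∃ t a : ℝ, t • u + a • v = x - m := by
    intro x
    rw [AffineSubspace.mem_mk', vsub_eq_sub, Submodule.mem_span_pair]
  have hpl : IsPlane (AffineSubspace.mk' m (Submodule.span ℝ {u, v})) := by
    unfold IsPlane
    rw [AffineSubspace.direction_mk']
    have h := finrank_span_eq_card hli
    rw [Matrix.range_cons, Matrix.range_cons, Matrix.range_empty, Set.union_empty, Set.singleton_union] at h
    rw [h]; simp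
  have hpm : m + v ∈ AffineSubspace.mk' m (Submodule.span ℝ {u, v}) :=
    (hmem _).2 ⟨0, 1, by simp⟩
  have hqm : m - v ∈ AffineSubspace.mk' m (Submodule.span ℝ {u, v}) :=
    (hmem _).2 ⟨0, -1, by simp⟩
  obtain ⟨k, ρ, hk, hρ, hC⟩ := hP _ hpl ⟨m + v, hpm, hp⟩
  obtain ⟨s, b, hsb⟩ := (hmem k).1 hk
  have hkk : k = m + (s • u + b • v) := by rw [hsb]; abel
  have hS : ∀ t a : ℝ, (m + (t • u + a • v) ∈ S ↔
      (t - s) ^ 2 * ‖u‖ ^ 2 + (a - b) ^ 2 * ‖v‖ ^ 2 = ρ ^ 2) := by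
    intro t a
    have hx : m + (t • u + a • v) ∈ AffineSubspace.mk' m (Submodule.span ℝ {u, v}) :=
      (hmem _).2 ⟨t, a, by simp⟩
    have h := Set.ext_iff.1 hC (m + (t • u + a • v))
    simp only [Set.mem_inter_iff, SetLike.mem_coe, hx, true_and, Set.mem_setOf_eq] at h
    rw [h, ← sq_eq_sq₀ (norm_nonneg _) hρ]
    have e : m + (t • u + a • v) - k = (t - s) • u + (a - b) • v := by
      rw [hkk]; module
    rw [e, norm_add_sq_real, real_inner_smul_left, real_inner_smul_right, huv, norm_smul,
      norm_smul, mul_pow, mul_pow]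
    simp
  have h1 := (hS 0 1).1 (by simpa using hp)
  have h2 := (hS 0 (-1)).1 (by simpa [sub_eq_add_neg] using hq)
  have hb : b = 0 := by
    have : b * ‖v‖ ^ 2 = 0 := by linarith
    rcases mul_eq_zero.1 this with h | h
    · exact h
    · exact absurd h hV.ne'
  subst hb
  refine ⟨s, fun t a => ?_⟩
  rw [hS t a, ← h1]
  constructor <;> intro h <;> linarith

lemma aux_alg (N V e D R s : ℝ) (hN : 0 < N) (hV : 0 < V)
    (h : ∀ t : ℝ, t ^ 2 * N - 2 * t * s * N = V → t ^ 2 * N - 2 * t * e + D = R) :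
    s * N = e ∧ R = D + V := by
  have hpos : 0 < s ^ 2 + V / N := by positivity
  have hw := Real.sq_sqrt hpos.le
  have hwp := Real.sqrt_pos.2 hpos
  set w := √(s ^ 2 + V / N)
  have hw' : w ^ 2 * N = s ^ 2 * N + V := by rw [hw]; field_simp
  have h1 := h (s + w) (by linear_combination hw')
  have h2 := h (s - w) (by linear_combination hw')
  have h3 : w * (s * N - e) = 0 := by linear_combination (h1 - h2) / 4
  have h4 : s * N = e := by
    rcases mul_eq_zero.1 h3 with h | h
    · exact absurd h hwp.ne'
    · linarith
  refine ⟨h4, ?_⟩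
  subst h4
  linear_combination -h1 + hw'

lemma aux_main (S : Set E3) (hP : PropertyP S) (m v : E3) (hv : v ≠ 0)
    (hp : m + v ∈ S) (hq : m - v ∈ S) :
    ∃ (c : E3) (r : ℝ), 0 < r ∧ S = {x : E3 | ‖x - c‖ = r} := by
  have hV : 0 < ‖v‖ ^ 2 := by positivity
  haveI : Fact (finrank ℝ E3 = 2 + 1) := ⟨by simp⟩
  have hfr : finrank ℝ (Submodule.span ℝ {v})ᗮ = 2 :=
    Submodule.finrank_orthogonal_span_singleton hv
  obtain ⟨u₀, hu₀, hu₀v⟩ : ∃ u : E3, u ≠ 0 ∧ ⟪u, v⟫ = 0 := by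
    have : (Submodule.span ℝ {v})ᗮ ≠ ⊥ := by
      intro h; rw [h] at hfr; simp at hfr
    obtain ⟨u, hu, hu0⟩ := Submodule.exists_mem_ne_zero_of_ne_bot this
    exact ⟨u, hu0, by rw [real_inner_comm]; exact Submodule.mem_orthogonal_singleton_iff_inner_right.1 hu⟩
  have hmem : ∀ x : E3, x ∈ AffineSubspace.mk' m (Submodule.span ℝ {v})ᗮ ↔ ⟪x - m, v⟫ = 0 := by
    intro x
    rw [AffineSubspace.mem_mk', vsub_eq_sub, Submodule.mem_orthogonal_singleton_iff_inner_left]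
  have hpl : IsPlane (AffineSubspace.mk' m (Submodule.span ℝ {v})ᗮ) := by
    unfold IsPlane
    rw [AffineSubspace.direction_mk']; exact hfr
  have hne : ((AffineSubspace.mk' m (Submodule.span ℝ {v})ᗮ : Set E3) ∩ S).Nonempty := by
    obtain ⟨s, hs⟩ := aux_plane S hP m u₀ v hu₀ hv hu₀v hp hq
    have hN : 0 < ‖u₀‖ ^ 2 := by positivity
    have hpos : 0 ≤ s ^ 2 + ‖v‖ ^ 2 / ‖u₀‖ ^ 2 := by positivity
    have hw := Real.sq_sqrt hpos
    set w := √(s ^ 2 + ‖v‖ ^ 2 / ‖u₀‖ ^ 2)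
    have hw' : w ^ 2 * ‖u₀‖ ^ 2 = s ^ 2 * ‖u₀‖ ^ 2 + ‖v‖ ^ 2 := by rw [hw]; field_simp
    refine ⟨m + ((s + w) • u₀ + (0 : ℝ) • v), (hmem _).2 ?_, (hs _ _).2 ?_⟩
    · simp [real_inner_smul_left, hu₀v]
    · linear_combination hw'
  obtain ⟨c, r, hc, hr, hC⟩ := hP _ hpl hne
  have hcv := (hmem c).1 hc
  -- key relations for every direction
  have key : ∀ u : E3, u ≠ 0 → ⟪u, v⟫ = 0 → r ^ 2 = ‖c - m‖ ^ 2 + ‖v‖ ^ 2 ∧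
      ∀ t a : ℝ, (m + (t • u + a • v) ∈ S ↔ ‖m + (t • u + a • v) - c‖ ^ 2 = r ^ 2) := by
    intro u hu huv
    obtain ⟨s, hs⟩ := aux_plane S hP m u v hu hv huv hp hq
    have hn : ∀ t a : ℝ, ‖m + (t • u + a • v) - c‖ ^ 2 =
        t ^ 2 * ‖u‖ ^ 2 + a ^ 2 * ‖v‖ ^ 2 - 2 * t * ⟪u, c - m⟫ + ‖c - m‖ ^ 2 := by
      intro t a
      have e : m + (t • u + a • v) - c = (t • u + a • v) - (c - m) := by abel
      rw [e, norm_sub_sq_real, norm_add_sq_real, inner_add_left, real_inner_smul_left,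
        real_inner_smul_left, real_inner_smul_left, real_inner_smul_right, huv,
        real_inner_comm (c - m) v, hcv, norm_smul, norm_smul, mul_pow, mul_pow]
      simp
      ring
    have hA := aux_alg (‖u‖ ^ 2) (‖v‖ ^ 2) ⟪u, c - m⟫ (‖c - m‖ ^ 2) (r ^ 2) s
      (by positivity) hV (by
        intro t ht
        have hxS := (hs t 0).2 (by linarith)
        have hxm : m + (t • u + (0 : ℝ) • v) ∈ AffineSubspace.mk' m (Submodule.span ℝ {v})ᗮ :=
          (hmem _).2 (by simp [real_inner_smul_left, huv])
        have hx : m + (t • u + (0 : ℝ) • v) ∈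
          {x ∈ (AffineSubspace.mk' m (Submodule.span ℝ {v})ᗮ : Set E3) | ‖x - c‖ = r} := by
          rw [← hC]; exact ⟨hxm, hxS⟩
        have h1 := hn t 0
        rw [hx.2] at h1
        linarith)
    refine ⟨hA.2, fun t a => ?_⟩
    rw [hs, hn, hA.2, ← hA.1]
    constructor <;> intro h <;> linarith
  have hr2 := (key u₀ hu₀ hu₀v).1
  have hr0 : 0 < r := by
    rcases hr.lt_or_eq with h | h
    · exact h
    · exfalso
      rw [← h] at hr2
      nlinarith [sq_nonneg ‖c - m‖]
  refine ⟨c, r, hr0, ?_⟩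
  ext x
  rw [Set.mem_setOf_eq, ← sq_eq_sq₀ (norm_nonneg _) hr]
  obtain ⟨a, ha⟩ : ∃ a : ℝ, ⟪x - m - a • v, v⟫ = 0 := by
    refine ⟨⟪x - m, v⟫ / ‖v‖ ^ 2, ?_⟩
    rw [inner_sub_left, real_inner_smul_left, real_inner_self_eq_norm_sq]
    field_simp
    ring
  by_cases h0 : x - m - a • v = 0
  · have := (key u₀ hu₀ hu₀v).2 0 a
    have e : x = m + ((0 : ℝ) • u₀ + a • v) := by
      have : x = (x - m - a • v) + m + a • v := by abel
      rw [this, h0]; module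
    rw [e]; exact this
  · have := (key _ h0 ha).2 1 a
    have e : x = m + ((1 : ℝ) • (x - m - a • v) + a • v) := by module
    rw [← e] at this; exact this

/-- A nonempty connected regular surface in ℝ³ satisfying property 𝒫
is a Euclidean sphere. -/
theorem sphere_rigidity (S : Set E3) (hne : S.Nonempty) (hconn : IsConnected S)
    (hreg : IsRegularSurface S) (hP : PropertyP S) :
    ∃ (c : E3) (r : ℝ), 0 < r ∧ S = {x : E3 | ‖x - c‖ = r} := by
  obtain ⟨p₀, hp₀⟩ := hne
  obtain ⟨f, U, hU, -, -, ⟨u, hu, -⟩, ⟨W, -, hW⟩, ⟨φ, hφ⟩⟩ := hreg p₀ hp₀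
  obtain ⟨w, hw, hwu⟩ : ∃ w ∈ U, w ≠ u := by
    have hnb : U ∈ nhds u := hU.mem_nhds hu
    have := (Filter.nonempty_of_mem (Filter.inter_mem (mem_nhdsWithin_of_mem_nhds hnb)
      (self_mem_nhdsWithin : {u}ᶜ ∈ nhdsWithin u {u}ᶜ)))
    obtain ⟨w, h1, h2⟩ := this
    exact ⟨w, h1, h2⟩
  have hne' : f u ≠ f w := by
    intro h
    have h3 : φ ⟨u, hu⟩ = φ ⟨w, hw⟩ := Subtype.ext (by rw [hφ, hφ]; exact h)
    have := φ.injective h3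
    exact hwu (by simpa using (congrArg Subtype.val this).symm)
  have hS : ∀ y ∈ U, f y ∈ S := by
    intro y hy
    have : f y ∈ W ∩ S := hW ▸ Set.mem_image_of_mem f hy
    exact this.2
  refine aux_main S hP ((1 / 2 : ℝ) • (f u + f w)) ((1 / 2 : ℝ) • (f u - f w)) ?_ ?_ ?_
  · exact smul_ne_zero (by norm_num) (sub_ne_zero.2 hne')
  · convert hS u hu using 1; module
  · convert hS w hw using 1; module
end
end

section
/- Let S be a nonempty connected spacelike regular surface in Minkowski space 𝕃³ satisfying property 𝒫*. Then S is a hyperbolic plane: there exist c ∈ ℝ³, r > 0 and a sign ε ∈ {+1, −1} such that S = {x ∈ ℝ³ | ⟨x − c, x − c⟩₁ = −r² and ε(x₃ − c₃) > 0}. -/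
noncomputable section

open Module
open scoped RealInnerProductSpace

set_option maxHeartbeats 2000000

lemma mink_cs (y e : E3) : |mink y e| ≤ ‖y‖ * ‖e‖ := by
  apply abs_le_of_sq_le_sq _ (by positivity)
  rw [mul_pow, EuclideanSpace.real_norm_sq_eq, EuclideanSpace.real_norm_sq_eq, mink]
  simp only [Fin.sum_univ_three]
  nlinarith [sq_nonneg (y 0 * e 1 - y 1 * e 0), sq_nonneg (y 0 * e 2 + y 2 * e 0),
    sq_nonneg (y 1 * e 2 + y 2 * e 1)]

lemma mink_cont {X : Type*} [TopologicalSpace X] {f g : X → E3} (hf : Continuous f)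
    (hg : Continuous g) : Continuous (fun x => mink (f x) (g x)) := by
  unfold mink; fun_prop

/-- Derivative estimate. -/
lemma mink_pos_near (f : E2 → E3) (u0 : E2) (f' : E2 →L[ℝ] E3) (hf : HasFDerivAt f f' u0)
    (hpos : ∀ h : E2, h ≠ 0 → 0 < mink (f' h) (f' h)) :
    ∀ᶠ u in nhds u0, u ≠ u0 → 0 < mink (f u - f u0) (f u - f u0) := by
  obtain ⟨k, hk, hkb⟩ : ∃ k : ℝ, 0 < k ∧ ∀ h : E2, k * ‖h‖ ^ 2 ≤ mink (f' h) (f' h) := by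
    have hc : Continuous (fun h : E2 => mink (f' h) (f' h)) :=
      mink_cont f'.continuous f'.continuous
    obtain ⟨h0, hh0, hmin⟩ := (isCompact_sphere (0 : E2) 1).exists_isMinOn
      (NormedSpace.sphere_nonempty.2 zero_le_one) hc.continuousOn
    have h0n : h0 ≠ 0 := by
      rintro rfl; simp at hh0
    refine ⟨_, hpos h0 h0n, fun h => ?_⟩
    by_cases hz : h = 0
    · subst hz; simp [mink]
    have hn : 0 < ‖h‖ := norm_pos_iff.2 hz
    have h1 : (‖h‖⁻¹ • h) ∈ Metric.sphere (0 : E2) 1 := by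
      simp [norm_smul, hn.ne']
    have h2 := hmin h1
    simp only [Set.mem_ofPred_eq, map_smul] at h2
    have h3 : mink (‖h‖⁻¹ • f' h) (‖h‖⁻¹ • f' h) = (‖h‖ ^ 2)⁻¹ * mink (f' h) (f' h) := by
      simp only [mink, PiLp.smul_apply, smul_eq_mul]; field_simp
    rw [h3] at h2
    have := mul_le_mul_of_nonneg_left h2 (by positivity : 0 ≤ ‖h‖ ^ 2)
    rw [← mul_assoc, mul_inv_cancel₀ (by positivity), one_mul] at this
    linarith
  set M := ‖f'‖ with hM
  have hM0 : 0 ≤ M := norm_nonneg _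
  set η := min 1 (k / (2 * (2 * M + 1))) with hη
  have hη0 : 0 < η := lt_min one_pos (by positivity)
  have hη1 : η ≤ 1 := min_le_left _ _
  have hη2 : η * (2 * M + 1) ≤ k / 2 := by
    have : η ≤ k / (2 * (2 * M + 1)) := min_le_right _ _
    calc η * (2 * M + 1) ≤ k / (2 * (2 * M + 1)) * (2 * M + 1) := by gcongr
      _ = k / 2 := by field_simp
  filter_upwards [hf.isLittleO.def hη0] with u hu hne
  set h := u - u0 with hh
  have hn : 0 < ‖h‖ := norm_pos_iff.2 (sub_ne_zero.2 hne)
  set e := f u - f u0 - f' h with he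
  have hx : f u - f u0 = f' h + e := by rw [he]; abel
  have hexp : mink (f u - f u0) (f u - f u0)
      = mink (f' h) (f' h) + 2 * mink (f' h) e + mink e e := by
    rw [hx]; simp only [mink, PiLp.add_apply]; ring
  have hfh : ‖f' h‖ ≤ M * ‖h‖ := f'.le_opNorm h
  have b1 := neg_le_of_abs_le (mink_cs (f' h) e)
  have b2 := neg_le_of_abs_le (mink_cs e e)
  have b3 : ‖f' h‖ * ‖e‖ ≤ (M * ‖h‖) * (η * ‖h‖) := by gcongr
  have b4 : ‖e‖ * ‖e‖ ≤ (1 * ‖h‖) * (η * ‖h‖) := by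
    gcongr
    exact hu.trans (by gcongr)
  have b5 := hkb h
  rw [hexp]
  nlinarith [mul_le_mul_of_nonneg_right hη2 (sq_nonneg ‖h‖), sq_pos_of_pos hn,
    mul_pos hk (sq_pos_of_pos hn)]

/-- The projection to the first two coordinates. -/
def prj : E3 →L[ℝ] (Fin 2 → ℝ) :=
  ContinuousLinearMap.pi ![EuclideanSpace.proj 0, EuclideanSpace.proj 1]

lemma lsg (S : Set E3) (p : E3) (hp : p ∈ S) (hreg : IsSpacelikeSurface S) :
    ∃ ε > 0, (∀ q ∈ S, dist q p < ε → q ≠ p → 0 < mink (q - p) (q - p)) ∧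
      ∃ δ > 0, ∀ a b : ℝ, |a| < δ → |b| < δ →
        ∃ q ∈ S, dist q p < ε ∧ q 0 = p 0 + a ∧ q 1 = p 1 + b := by
  obtain ⟨f, U, ⟨hU, hf, hinj, hpU, ⟨W, hW, hWS⟩, φ, hφ⟩, hsp⟩ := hreg p hp
  obtain ⟨u0, hu0⟩ : ∃ u0 : E2, u0 = (φ.symm ⟨p, hpU⟩ : U) := ⟨_, rfl⟩
  have hfu : f u0 = p := by rw [hu0, ← hφ]; simp
  have hu0U : u0 ∈ U := by rw [hu0]; exact Subtype.property _
  have hcd : ContDiffAt ℝ (⊤ : ℕ∞) f u0 := hf.contDiffAt (hU.mem_nhds hu0U)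
  have hst : HasStrictFDerivAt f (fderiv ℝ f u0) u0 := hcd.hasStrictFDerivAt (by simp)
  have hpos : ∀ h : E2, h ≠ 0 → 0 < mink (fderiv ℝ f u0 h) (fderiv ℝ f u0 h) := by
    intro h hh
    refine (hsp u0 hu0U hfu).2 _ ⟨h, rfl⟩ ?_
    intro h0
    exact hh (hinj u0 hu0U (by simpa using h0))
  have hev := mink_pos_near f u0 _ hst.hasFDerivAt hpos
  have hpW : p ∈ W := (hWS ▸ hpU : p ∈ W ∩ S).1
  have hnear : ∀ᶠ q in nhdsWithin p S, q ≠ p → 0 < mink (q - p) (q - p) := by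
    have h1 : nhdsWithin p S = nhdsWithin p (f '' U) := by
      rw [hWS, Set.inter_comm, nhdsWithin_inter_of_mem' (mem_nhdsWithin_of_mem_nhds (hW.mem_nhds hpW))]
    rw [h1, nhdsWithin_eq_map_subtype_coe hpU, Filter.eventually_map]
    have ht : Filter.Tendsto (fun y : f '' U => ((φ.symm y : U) : E2)) (nhds ⟨p, hpU⟩) (nhds u0) :=
      hu0 ▸ (continuous_subtype_val.comp φ.symm.continuous).tendsto _
    filter_upwards [ht.eventually hev] with y hy hyp
    have e1 : f (φ.symm y : U) = y := by rw [← hφ]; simp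
    rw [e1, hfu] at hy
    apply hy
    intro h
    apply hyp
    rw [← e1, h, hfu]
  obtain ⟨ε, hε, hεb⟩ := Metric.mem_nhdsWithin_iff.1 hnear
  refine ⟨ε, hε, fun q hq hd => hεb ⟨hd, hq⟩, ?_⟩
  have hst2 : HasStrictFDerivAt (fun u => prj (f u)) (prj.comp (fderiv ℝ f u0)) u0 :=
    prj.hasStrictFDerivAt.comp u0 hst
  have hsurj : (prj.comp (fderiv ℝ f u0)).range = ⊤ := by
    rw [LinearMap.range_eq_top]
    have hi : Function.Injective (prj.comp (fderiv ℝ f u0) : E2 →ₗ[ℝ] (Fin 2 → ℝ)) := by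
      rw [← LinearMap.ker_eq_bot, LinearMap.ker_eq_bot']
      intro h hh
      by_contra hne
      have := hpos h hne
      have h0 := congrFun hh 0
      have h1 := congrFun hh 1
      simp [prj] at h0 h1
      rw [mink, h0, h1] at this
      nlinarith [mul_self_nonneg ((fderiv ℝ f u0 h) 2)]
    exact (LinearMap.injective_iff_surjective_of_finrank_eq_finrank (by simp)).1 hi
  have hmap := hst2.map_nhds_eq_of_surj hsurj
  have hN : {u | u ∈ U ∧ dist (f u) p < ε} ∈ nhds u0 := by
    have hc : ∀ᶠ u in nhds u0, dist (f u) p < ε := by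
      have := hcd.continuousAt.eventually (Metric.ball_mem_nhds (f u0) hε)
      rw [hfu] at this
      exact this
    exact Filter.inter_mem (hU.mem_nhds hu0U) hc
  have hI := Filter.image_mem_map (m := fun u => prj (f u)) hN
  rw [hmap] at hI
  obtain ⟨δ, hδ, hδb⟩ := Metric.mem_nhds_iff.1 hI
  refine ⟨δ, hδ, fun a b ha hb => ?_⟩
  have hmem : prj (f u0) + ![a, b] ∈ Metric.ball (prj (f u0)) δ := by
    rw [Metric.mem_ball, dist_eq_norm, add_sub_cancel_left, pi_norm_lt_iff hδ]
    intro i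
    fin_cases i <;> simpa
  obtain ⟨u, ⟨huU, hud⟩, hue⟩ := hδb hmem
  have hS : f u ∈ S := (hWS ▸ Set.mem_image_of_mem f huU : f u ∈ W ∩ S).2
  refine ⟨f u, hS, hud, ?_, ?_⟩
  · have := congrFun hue 0
    simpa [prj, hfu] using this
  · have := congrFun hue 1
    simpa [prj, hfu] using this

lemma plane_form (S : Set E3) (p : E3) (hp : p ∈ S) (hP : PropertyPStar S) (a b : ℝ)
    (hab : a ^ 2 + b ^ 2 < 1) :
    ∃ α β : ℝ, ∀ x : E3, x 2 - p 2 = a * (x 0 - p 0) + b * (x 1 - p 1) →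
      (x ∈ S ↔ mink (x - p) (x - p) = α * (x 0 - p 0) + β * (x 1 - p 1)) := by
  let L : E3 →ₗ[ℝ] ℝ :=
    ((EuclideanSpace.proj 2 : E3 →L[ℝ] ℝ) - a • (EuclideanSpace.proj 0 : E3 →L[ℝ] ℝ)
      - b • (EuclideanSpace.proj 1 : E3 →L[ℝ] ℝ) : E3 →L[ℝ] ℝ)
  have hL : ∀ x, L x = x 2 - a * x 0 - b * x 1 := fun x => by simp [L]
  have hL0 : L ≠ 0 := by
    intro h
    have := hL (EuclideanSpace.single 2 1)
    rw [h] at this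
    simp at this
  have hmem : ∀ x, x ∈ AffineSubspace.mk' p L.ker ↔
      x 2 - p 2 = a * (x 0 - p 0) + b * (x 1 - p 1) := by
    intro x
    rw [AffineSubspace.mem_mk', LinearMap.mem_ker, hL]
    simp only [vsub_eq_sub, PiLp.sub_apply]
    constructor <;> intro h <;> linarith
  have hsp : IsSpacelikePlane (AffineSubspace.mk' p L.ker) := by
    constructor
    · unfold IsPlane
      rw [AffineSubspace.direction_mk']
      have := Module.Dual.finrank_ker_add_one_of_ne_zero (f := L) hL0
      have h3 : finrank ℝ E3 = 3 := by simp
      omega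
    · intro v hv hv0
      rw [AffineSubspace.direction_mk', LinearMap.mem_ker, hL] at hv
      have h2 : v 2 = a * v 0 + b * v 1 := by linarith
      have hne : 0 < v 0 ^ 2 + v 1 ^ 2 := by
        by_contra hcon
        have h0 : v 0 = 0 := by nlinarith [sq_nonneg (v 0), sq_nonneg (v 1)]
        have h1 : v 1 = 0 := by nlinarith [sq_nonneg (v 0), sq_nonneg (v 1)]
        apply hv0
        ext i
        fin_cases i
        · simpa using h0
        · simpa using h1
        · simp [h2, h0, h1]
      rw [mink, h2]
      nlinarith [sq_nonneg (a * v 1 - b * v 0)]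
  obtain ⟨c, r, hc, hr, hC⟩ := hP _ hsp ⟨p, AffineSubspace.self_mem_mk' _ _, hp⟩
  have key : ∀ x, x 2 - p 2 = a * (x 0 - p 0) + b * (x 1 - p 1) →
      (x ∈ S ↔ mink (x - c) (x - c) = r ^ 2) := by
    intro x hx
    have := Set.ext_iff.1 hC x
    simp only [Set.mem_inter_iff, SetLike.mem_coe, Set.mem_ofPred_eq, hmem, hx, true_and] at this
    exact this
  have hpp := (key p (by ring)).1 hp
  refine ⟨2 * (c 0 - p 0) - 2 * a * (c 2 - p 2), 2 * (c 1 - p 1) - 2 * b * (c 2 - p 2), ?_⟩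
  intro x hx
  rw [key x hx, ← hpp]
  simp only [mink, PiLp.sub_apply]
  have hx2 : x 2 = p 2 + a * (x 0 - p 0) + b * (x 1 - p 1) := by linarith
  rw [hx2]
  constructor <;> intro h <;> linear_combination h

lemma compat (T : ℝ → ℝ → ℝ → Prop) (α β : ℝ → ℝ → ℝ)
    (hT : ∀ a b, a ^ 2 + b ^ 2 < 1 → ∀ u v,
      (T u v (a * u + b * v) ↔ u ^ 2 + v ^ 2 - (a * u + b * v) ^ 2 = α a b * u + β a b * v)) :
    ∃ A B C : ℝ, ∀ a b, a ^ 2 + b ^ 2 < 1 → α a b = A + C * a ∧ β a b = B + C * b := by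
  have cp : ∀ a b a' b', a ^ 2 + b ^ 2 < 1 → a' ^ 2 + b' ^ 2 < 1 → ∀ u v,
      a * u + b * v = a' * u + b' * v →
      α a b * u + β a b * v = α a' b' * u + β a' b' * v := by
    have half : ∀ a b a' b', a ^ 2 + b ^ 2 < 1 → a' ^ 2 + b' ^ 2 < 1 → ∀ u v,
      a * u + b * v = a' * u + b' * v → α a b * u + β a b * v ≠ 0 →
      α a b * u + β a b * v = α a' b' * u + β a' b' * v := by
      intro a b a' b' h h' u v he hne
      have hpos : 0 < u ^ 2 + v ^ 2 - (a * u + b * v) ^ 2 := by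
        have hn : 0 < u ^ 2 + v ^ 2 := by
          by_contra hcon
          have h0 : u = 0 := by nlinarith [sq_nonneg u, sq_nonneg v]
          have h1 : v = 0 := by nlinarith [sq_nonneg u, sq_nonneg v]
          apply hne; rw [h0, h1]; ring
        nlinarith [sq_nonneg (a * v - b * u)]
      set N := u ^ 2 + v ^ 2 - (a * u + b * v) ^ 2 with hN
      set F := α a b * u + β a b * v with hF
      set t := F / N with ht
      have htN : t * N = F := by rw [ht]; field_simp
      have ht0 : t ≠ 0 := div_ne_zero hne hpos.ne'
      have h1 := (hT a b h (t * u) (t * v)).2 (by linear_combination t * htN)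
      have h2 : a * (t * u) + b * (t * v) = a' * (t * u) + b' * (t * v) := by
        linear_combination t * he
      rw [h2] at h1
      have h3 := (hT a' b' h' _ _).1 h1
      rw [← h2] at h3
      have h4 : t * (F - (α a' b' * u + β a' b' * v)) = 0 := by
        linear_combination h3 - t * htN
      rcases mul_eq_zero.1 h4 with h5 | h5
      · exact absurd h5 ht0
      · linarith
    intro a b a' b' h h' u v he
    by_cases hz : α a b * u + β a b * v = 0
    · by_cases hz' : α a' b' * u + β a' b' * v = 0
      · rw [hz, hz']
      · exact (half _ _ _ _ h' h u v he.symm hz').symm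
    · exact half _ _ _ _ h h' u v he hz
  set A := α 0 0 with hA
  set B := β 0 0 with hB
  have z0 : (0 : ℝ) ^ 2 + 0 ^ 2 < 1 := by norm_num
  have z1 : (1 / 2 : ℝ) ^ 2 + 0 ^ 2 < 1 := by norm_num
  have z2 : (0 : ℝ) ^ 2 + (1 / 2) ^ 2 < 1 := by norm_num
  have e1 := cp _ _ _ _ z1 z0 0 1 (by ring)
  have e2 := cp _ _ _ _ z2 z0 1 0 (by ring)
  have e3 := cp _ _ _ _ z1 z2 1 1 (by ring)
  have g1 : β (1 / 2) 0 = B := by linarith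
  have g2 : α 0 (1 / 2) = A := by linarith
  refine ⟨A, B, 2 * (α (1 / 2) 0 - A), fun a b h => ?_⟩
  have k0 := cp _ _ _ _ h z0 (-b) a (by ring)
  have k1 := cp _ _ _ _ h z1 (-b) (a - 1 / 2) (by ring)
  have k2 := cp _ _ _ _ h z2 (b - 1 / 2) (-a) (by ring)
  rw [g1] at k1
  rw [g2] at k2
  have g3 : β 0 (1 / 2) = B + α (1 / 2) 0 - A := by linarith
  rw [g3] at k2
  have r2 : β a b = B + 2 * (α (1 / 2) 0 - A) * b := by linear_combination 2 * k0 - 2 * k1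
  have r1 : α a b = A + 2 * (α (1 / 2) 0 - A) * a := by linear_combination -2 * k0 - 2 * k2
  exact ⟨r1, r2⟩

lemma lemA (S : Set E3) (p : E3) (hp : p ∈ S) (hP : PropertyPStar S) :
    ∃ c : E3, ∀ x : E3, 0 < mink (x - p) (x - p) →
      (x ∈ S ↔ mink (x - c) (x - c) = mink (p - c) (p - c)) := by
  have h1 : ∀ a b : ℝ, ∃ α β : ℝ, a ^ 2 + b ^ 2 < 1 → ∀ x : E3,
      x 2 - p 2 = a * (x 0 - p 0) + b * (x 1 - p 1) →
      (x ∈ S ↔ mink (x - p) (x - p) = α * (x 0 - p 0) + β * (x 1 - p 1)) := by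
    intro a b
    by_cases hab : a ^ 2 + b ^ 2 < 1
    · obtain ⟨α, β, h⟩ := plane_form S p hp hP a b hab
      exact ⟨α, β, fun _ => h⟩
    · exact ⟨0, 0, fun h => absurd h hab⟩
  choose α β hαβ using h1
  obtain ⟨A, B, C, hABC⟩ := compat (fun u v w => p + !₂[u, v, w] ∈ S) α β (by
    intro a b hab u v
    have := hαβ a b hab (p + !₂[u, v, a * u + b * v]) (by simp)
    rw [this]
    simp only [mink, PiLp.sub_apply, PiLp.add_apply]
    simp
    constructor <;> intro h <;> linear_combination h)
  refine ⟨p + !₂[A / 2, B / 2, -C / 2], fun x hx => ?_⟩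
  set u := x 0 - p 0 with hu
  set v := x 1 - p 1 with hv
  set w := x 2 - p 2 with hw
  have hx' : 0 < u ^ 2 + v ^ 2 - w ^ 2 := by
    simp only [mink, PiLp.sub_apply] at hx
    nlinarith
  have hN : 0 < u ^ 2 + v ^ 2 := by nlinarith [sq_nonneg w]
  set a := w * u / (u ^ 2 + v ^ 2) with ha
  set b := w * v / (u ^ 2 + v ^ 2) with hb
  have hw2 : w = a * u + b * v := by rw [ha, hb]; field_simp
  have hab : a ^ 2 + b ^ 2 < 1 := by
    have : a ^ 2 + b ^ 2 = w ^ 2 / (u ^ 2 + v ^ 2) := by rw [ha, hb]; field_simp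
    rw [this, div_lt_one hN]; linarith
  obtain ⟨e1, e2⟩ := hABC a b hab
  rw [hαβ a b hab x hw2, e1, e2]
  simp only [mink, PiLp.sub_apply, PiLp.add_apply]
  simp
  constructor <;> intro h
  · linear_combination h - C * hw2
  · linear_combination h + C * hw2

lemma sheet_sp (a0 a1 a2 b0 b1 b2 m : ℝ) (hm : 0 < m) (ha : a0 * a0 + a1 * a1 - a2 * a2 = -m)
    (hb : b0 * b0 + b1 * b1 - b2 * b2 = -m) (hab : 0 < a2 * b2) (hne : a0 ≠ b0 ∨ a1 ≠ b1) :
    a0 * b0 + a1 * b1 - a2 * b2 < -m := by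
  by_contra hcon
  have h1 : a2 * b2 ≤ a0 * b0 + a1 * b1 + m := by linarith
  have h2 : (a2 * b2) ^ 2 ≤ (a0 * b0 + a1 * b1 + m) ^ 2 := by gcongr
  have h3 : (a2 * b2) ^ 2 = (a0 * a0 + a1 * a1 + m) * (b0 * b0 + b1 * b1 + m) := by
    have : a2 * a2 = a0 * a0 + a1 * a1 + m := by linarith
    have h' : b2 * b2 = b0 * b0 + b1 * b1 + m := by linarith
    rw [← this, ← h']; ring
  have h4 : 0 < (a0 - b0) ^ 2 + (a1 - b1) ^ 2 := by
    rcases hne with h | h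
    · have := sq_pos_of_ne_zero (sub_ne_zero.2 h); positivity
    · have := sq_pos_of_ne_zero (sub_ne_zero.2 h); positivity
  nlinarith [sq_nonneg (a0 * b1 - a1 * b0), mul_pos hm h4]

/-- A nonempty connected spacelike regular surface in 𝕃³ satisfying
property 𝒫* is a hyperbolic plane. -/
theorem hyperbolic_rigidity (S : Set E3) (hne : S.Nonempty) (hconn : IsConnected S)
    (hreg : IsSpacelikeSurface S) (hP : PropertyPStar S) :
    ∃ (c : E3) (r ε : ℝ), 0 < r ∧ (ε = 1 ∨ ε = -1) ∧
      S = {x : E3 | mink (x - c) (x - c) = -r ^ 2 ∧ 0 < ε * (x 2 - c 2)} := by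
  obtain ⟨p, hp⟩ := hne
  obtain ⟨c, hA⟩ := lemA S p hp hP
  obtain ⟨ε, hε, hsp, δ, hδ, hgr⟩ := lsg S p hp hreg
  -- points of `S` near `p` satisfy a strict inequality
  have hstrict : ∀ q ∈ S, dist q p < ε → q ≠ p → mink (q - p) (p - c) < 0 := by
    intro q hq hd hne
    have h1 := hsp q hq hd hne
    have h2 := (hA q h1).1 hq
    simp only [mink, PiLp.sub_apply] at h1 h2 ⊢
    nlinarith
  have hm : mink (p - c) (p - c) < 0 := by
    by_contra hcon
    push Not at hcon
    set n0 := p 0 - c 0 with hn0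
    set n1 := p 1 - c 1 with hn1
    set n2 := p 2 - c 2 with hn2
    have hcon' : n2 ^ 2 ≤ n0 ^ 2 + n1 ^ 2 := by
      simp only [mink, PiLp.sub_apply] at hcon
      nlinarith
    by_cases hz : n0 ^ 2 + n1 ^ 2 = 0
    · have z0 : n0 = 0 := by nlinarith [sq_nonneg n0, sq_nonneg n1]
      have z1 : n1 = 0 := by nlinarith [sq_nonneg n0, sq_nonneg n1]
      have z2 : n2 = 0 := by nlinarith [sq_nonneg n2]
      obtain ⟨q, hq, hd, hq0, hq1⟩ := hgr (δ / 2) 0 (by rw [abs_of_pos] <;> linarith) (by simpa)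
      have := hstrict q hq hd (by rintro rfl; linarith)
      simp only [mink, PiLp.sub_apply, ← hn0, ← hn1, ← hn2, z0, z1, z2] at this
      linarith
    · have hs : 0 < n0 ^ 2 + n1 ^ 2 := lt_of_le_of_ne (by positivity) (Ne.symm hz)
      set t := δ / (|n0| + |n1| + 1) with ht
      have ht0 : 0 < t := by positivity
      have htd : t * (|n0| + |n1| + 1) = δ := by rw [ht]; field_simp
      obtain ⟨q, hq, hd, hq0, hq1⟩ := hgr (t * n0) (t * n1)
        (by rw [abs_mul, abs_of_pos ht0]; nlinarith [mul_nonneg ht0.le (abs_nonneg n1)])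
        (by rw [abs_mul, abs_of_pos ht0]; nlinarith [mul_nonneg ht0.le (abs_nonneg n0)])
      have hqp : q ≠ p := by
        rintro rfl
        have a0 : t * n0 = 0 := by linarith
        have a1 : t * n1 = 0 := by linarith
        have b0 : n0 = 0 := by simpa [ht0.ne'] using a0
        have b1 : n1 = 0 := by simpa [ht0.ne'] using a1
        rw [b0, b1] at hs
        norm_num at hs
      have h1 := hstrict q hq hd hqp
      have h2 := hsp q hq hd hqp
      simp only [mink, PiLp.sub_apply, ← hn0, ← hn1, ← hn2, hq0, hq1, add_sub_cancel_left] at h1 h2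
      set y := q 2 - p 2 with hy
      have h3 : t * (n0 ^ 2 + n1 ^ 2) < y * n2 := by nlinarith
      have h4 : (t * (n0 ^ 2 + n1 ^ 2)) ^ 2 < (y * n2) ^ 2 := by gcongr
      have h5 : y ^ 2 ≤ t ^ 2 * (n0 ^ 2 + n1 ^ 2) := by nlinarith
      have h6 : y ^ 2 * n2 ^ 2 ≤ (t ^ 2 * (n0 ^ 2 + n1 ^ 2)) * (n0 ^ 2 + n1 ^ 2) := by gcongr
      have h7 : (y * n2) ^ 2 = y ^ 2 * n2 ^ 2 := by ring
      have h8 : (t * (n0 ^ 2 + n1 ^ 2)) ^ 2 = (t ^ 2 * (n0 ^ 2 + n1 ^ 2)) * (n0 ^ 2 + n1 ^ 2) := by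
        ring
      linarith
  have hn2 : p 2 - c 2 ≠ 0 := by
    intro h
    simp only [mink, PiLp.sub_apply, h] at hm
    nlinarith [sq_nonneg (p 0 - c 0), sq_nonneg (p 1 - c 1)]
  obtain ⟨s, hs, hsp2⟩ : ∃ s : ℝ, (s = 1 ∨ s = -1) ∧ 0 < s * (p 2 - c 2) := by
    rcases lt_or_gt_of_ne hn2 with h | h
    · exact ⟨-1, Or.inr rfl, by linarith⟩
    · exact ⟨1, Or.inl rfl, by linarith⟩
  have hs2 : s * s = 1 := by rcases hs with rfl | rfl <;> norm_num
  refine ⟨c, Real.sqrt (-mink (p - c) (p - c)), s, Real.sqrt_pos.2 (by linarith), hs, ?_⟩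
  rw [Real.sq_sqrt (by linarith), neg_neg]
  set m := mink (p - c) (p - c) with hmdef
  set H := {x : E3 | mink (x - c) (x - c) = m ∧ 0 < s * (x 2 - c 2)} with hH
  -- points of the sheet are spacelike separated from `p`
  have hHsp : ∀ x ∈ H, x ≠ p → 0 < mink (x - p) (x - p) := by
    rintro x ⟨hx1, hx2⟩ hne
    have hprod : 0 < (x 2 - c 2) * (p 2 - c 2) := by
      have := mul_pos hx2 hsp2
      have e : s * (x 2 - c 2) * (s * (p 2 - c 2)) = s * s * ((x 2 - c 2) * (p 2 - c 2)) := by ring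
      rwa [e, hs2, one_mul] at this
    simp only [mink, PiLp.sub_apply] at hx1 hmdef ⊢
    by_cases hd : x 0 - c 0 ≠ p 0 - c 0 ∨ x 1 - c 1 ≠ p 1 - c 1
    · have := sheet_sp (x 0 - c 0) (x 1 - c 1) (x 2 - c 2) (p 0 - c 0) (p 1 - c 1) (p 2 - c 2)
        (-m) (by linarith) (by linarith) (by linarith) hprod hd
      nlinarith
    · exfalso
      push Not at hd
      obtain ⟨d0, d1⟩ := hd
      apply hne
      rw [d0, d1] at hx1
      have hsq : (x 2 - c 2) ^ 2 = (p 2 - c 2) ^ 2 := by linarith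
      have d2 : x 2 - c 2 = p 2 - c 2 := by
        rcases sq_eq_sq_iff_eq_or_eq_neg.1 hsq with h | h
        · exact h
        · rw [h] at hprod; nlinarith [sq_nonneg (p 2 - c 2)]
      ext i
      fin_cases i
      · show x 0 = p 0
        linarith
      · show x 1 = p 1
        linarith
      · show x 2 = p 2
        linarith
  have hpH : p ∈ H := ⟨rfl, hsp2⟩
  have hHS : H ⊆ S := by
    intro x hx
    by_cases hxp : x = p
    · rwa [hxp]
    · exact (hA x (hHsp x hx hxp)).2 hx.1
  have hHcl : IsClosed H := by
    have : H = {x : E3 | mink (x - c) (x - c) = m} ∩ {x : E3 | 0 ≤ s * (x 2 - c 2)} := by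
      ext x
      constructor
      · exact fun h => ⟨h.1, h.2.le⟩
      · rintro ⟨h1, h2⟩
        refine ⟨h1, lt_of_le_of_ne h2 (Ne.symm fun h => ?_)⟩
        have h3 : x 2 - c 2 = 0 := by
          have := congrArg (fun z => s * z) h
          simpa [← mul_assoc, hs2] using this
        simp only [Set.mem_ofPred_eq, mink, PiLp.sub_apply, h3] at h1
        nlinarith [sq_nonneg (x 0 - c 0), sq_nonneg (x 1 - c 1)]
    rw [this]
    exact (isClosed_eq (mink_cont (by fun_prop) (by fun_prop)) continuous_const).inter
      (isClosed_le continuous_const (by fun_prop))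
  set O : Set E3 := ({x : E3 | 0 < mink (x - p) (x - p)} ∪ Metric.ball p ε) ∩
    {x : E3 | 0 < s * (x 2 - c 2)} with hO
  have hOo : IsOpen O :=
    ((isOpen_lt continuous_const (mink_cont (by fun_prop) (by fun_prop))).union
      Metric.isOpen_ball).inter (isOpen_lt continuous_const (by fun_prop))
  have hHO : H ⊆ O := by
    intro x hx
    refine ⟨?_, hx.2⟩
    by_cases hxp : x = p
    · right; rw [hxp]; exact Metric.mem_ball_self hε
    · left; exact hHsp x hx hxp
  have hSO : ∀ x ∈ S, x ∈ O → x ∈ H := by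
    rintro x hxS ⟨h1, h2⟩
    by_cases hxp : x = p
    · rwa [hxp]
    have h3 : 0 < mink (x - p) (x - p) := by
      rcases h1 with h1 | h1
      · exact h1
      · exact hsp x hxS h1 hxp
    exact ⟨(hA x h3).1 hxS, h2⟩
  apply Set.Subset.antisymm _ hHS
  intro x hx
  by_contra hxH
  obtain ⟨y, hyS, hyO, hyH⟩ := hconn.isPreconnected O Hᶜ hOo hHcl.isOpen_compl
    (fun z _ => (em (z ∈ H)).imp (fun h => hHO h) id) ⟨p, hp, hHO hpH⟩ ⟨x, hx, hxH⟩
  exact hyH (hSO y hyS hyO)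
end
end

section
/- Let L be a line in ℝ³, let Π₀ be a plane perpendicular to L, let P = L ∩ Π₀, let C be a circle in Π₀ with center P and radius ρ > 0, let Q ∈ L with Q ∉ Π₀, and let Σ be the unique Euclidean sphere containing C ∪ {Q}. Then for every plane Π containing L, every circle in Π of positive radius that passes through Q and through the two points of Π ∩ C is contained in Σ and has the same radius as Σ; moreover, Σ equals the union over all planes Π containing L of these circles. -/
noncomputable section

open Module
open scoped RealInnerProductSpace

theorem center_aux (D : Submodule ℝ E3) (hD : 2 ≤ finrank ℝ D) (w : E3) (hw : w ∈ D)
    (hw0 : w ≠ 0) (ρ : ℝ) (hρ : 0 < ρ) (e : E3) (he : e ∈ D) (r : ℝ)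
    (h1 : ∀ v ∈ D, ⟪w, v⟫ = 0 → ‖v‖ = ρ → ‖v - e‖ = r) (h2 : ‖w - e‖ = r) :
    e = ((1 - ρ ^ 2 / ‖w‖ ^ 2) / 2) • w := by
  have hW : 0 < ‖w‖ := norm_pos_iff.mpr hw0
  have hproj : ∀ z : E3, ⟪w, z - (⟪w, z⟫ / ‖w‖ ^ 2) • w⟫ = 0 := by
    intro z
    rw [inner_sub_right, real_inner_smul_right, real_inner_self_eq_norm_sq]
    field_simp
    ring
  have hscale : ∀ v ∈ D, ⟪w, v⟫ = 0 → v ≠ 0 → ⟪v, e⟫ = 0 ∧ ρ ^ 2 + ‖e‖ ^ 2 = r ^ 2 := by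
    intro v hv hwv hv0
    have hV : 0 < ‖v‖ := norm_pos_iff.mpr hv0
    have hn : ‖(ρ / ‖v‖) • v‖ = ρ := by
      rw [norm_smul, Real.norm_of_nonneg (by positivity)]
      field_simp
    have a1 := h1 ((ρ / ‖v‖) • v) (D.smul_mem _ hv)
      (by rw [real_inner_smul_right, hwv, mul_zero]) hn
    have a2 := h1 (-((ρ / ‖v‖) • v)) (D.neg_mem (D.smul_mem _ hv))
      (by rw [inner_neg_right, real_inner_smul_right, hwv, mul_zero, neg_zero])
      (by rw [norm_neg, hn])
    have b1 := norm_sub_sq_real ((ρ / ‖v‖) • v) e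
    have b2 := norm_sub_sq_real (-((ρ / ‖v‖) • v)) e
    rw [a1, hn, real_inner_smul_left] at b1
    rw [a2, norm_neg, hn, inner_neg_left, real_inner_smul_left] at b2
    have c1 : (ρ / ‖v‖) * ⟪v, e⟫ = 0 := by linarith
    refine ⟨?_, by linarith⟩
    rcases mul_eq_zero.mp c1 with h | h
    · exact absurd h (by positivity)
    · exact h
  have hea : e = (⟪w, e⟫ / ‖w‖ ^ 2) • w := by
    by_contra hne
    have hu0 : e - (⟪w, e⟫ / ‖w‖ ^ 2) • w ≠ 0 := sub_ne_zero.mpr hne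
    have h := (hscale _ (D.sub_mem he (D.smul_mem _ hw)) (hproj e) hu0).1
    have h3 : ⟪e - (⟪w, e⟫ / ‖w‖ ^ 2) • w, e - (⟪w, e⟫ / ‖w‖ ^ 2) • w⟫ = 0 := by
      conv_lhs => rw [inner_sub_right]
      rw [h, real_inner_smul_right, real_inner_comm w, hproj]
      simp
    exact hu0 (inner_self_eq_zero.mp h3)
  obtain ⟨z, hz, hzn⟩ : ∃ z ∈ D, z ∉ Submodule.span ℝ {w} := by
    by_contra! hcon
    have hle : D ≤ Submodule.span ℝ {w} := hcon
    have := Submodule.finrank_mono hle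
    rw [finrank_span_singleton hw0] at this
    omega
  have hu0 : z - (⟪w, z⟫ / ‖w‖ ^ 2) • w ≠ 0 := by
    intro h
    rw [sub_eq_zero] at h
    exact hzn (h ▸ Submodule.smul_mem _ _ (Submodule.mem_span_singleton_self w))
  have h3 := (hscale _ (D.sub_mem hz (D.smul_mem _ hw)) (hproj z) hu0).2
  have h4 := norm_sub_sq_real w e
  rw [h2, ← h3] at h4
  have h5 : ⟪w, e⟫ / ‖w‖ ^ 2 = (1 - ρ ^ 2 / ‖w‖ ^ 2) / 2 := by
    field_simp
    linarith
  rw [← h5]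
  exact hea

/-- With `Σ` the (unique) sphere of center `cSph` and radius `rSph > 0`
through `C ∪ {Q}`: for every plane `Pl` containing `L`, every circle of positive radius
in `Pl` through `Q` and through the two points of `Pl ∩ C` is contained in `Σ` and has
radius `rSph`; moreover, `Σ` is the union of all such circles. -/
theorem sphere_is_union_of_circles (L : AffineSubspace ℝ E3) (hL : IsLine L)
    (Pl₀ : AffineSubspace ℝ E3) (hPl₀ : IsPlane Pl₀)
    (hperp : ∀ w ∈ L.direction, ∀ v ∈ Pl₀.direction, ⟪w, v⟫ = 0)
    (P : E3) (hPL : P ∈ L) (hPPl : P ∈ Pl₀)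
    (C : Set E3) (ρ : ℝ) (hρ : 0 < ρ) (hC : IsCircleIn Pl₀ P ρ C)
    (Q : E3) (hQL : Q ∈ L) (hQPl : Q ∉ Pl₀)
    (cSph : E3) (rSph : ℝ) (hrSph : 0 < rSph)
    (hSph : C ∪ {Q} ⊆ {x : E3 | ‖x - cSph‖ = rSph}) :
    (∀ Pl : AffineSubspace ℝ E3, IsPlane Pl → (L : Set E3) ⊆ (Pl : Set E3) →
      ∀ (C' : Set E3) (c' : E3) (r' : ℝ), 0 < r' → IsCircleIn Pl c' r' C' →
        Q ∈ C' → (Pl : Set E3) ∩ C ⊆ C' →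
        C' ⊆ {x : E3 | ‖x - cSph‖ = rSph} ∧ r' = rSph) ∧
    {x : E3 | ‖x - cSph‖ = rSph} =
      {x : E3 | ∃ Pl : AffineSubspace ℝ E3, IsPlane Pl ∧ (L : Set E3) ⊆ (Pl : Set E3) ∧
        ∃ (C' : Set E3) (c' : E3) (r' : ℝ), 0 < r' ∧ IsCircleIn Pl c' r' C' ∧
          Q ∈ C' ∧ (Pl : Set E3) ∩ C ⊆ C' ∧ x ∈ C'} := by
  obtain ⟨-, -, rfl⟩ := hC
  have hw : Q - P ∈ L.direction := AffineSubspace.vsub_mem_direction hQL hPL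
  set w := Q - P with hwdef
  have hw0 : w ≠ 0 := by
    intro h
    rw [hwdef, sub_eq_zero] at h
    exact hQPl (h ▸ hPPl)
  have hLs : Submodule.span ℝ {w} = L.direction := by
    apply Submodule.eq_of_le_of_finrank_eq
    · rw [Submodule.span_singleton_le_iff_mem]; exact hw
    · rw [finrank_span_singleton hw0]; exact hL.symm
  have hort : ∀ n : E3, n ≠ 0 → finrank ℝ (Submodule.span ℝ {n})ᗮ = 2 := by
    intro n hn
    have h := Submodule.finrank_add_finrank_orthogonal (Submodule.span ℝ {n})
    rw [finrank_span_singleton hn, finrank_euclideanSpace_fin] at h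
    omega
  have hP0 : Pl₀.direction = (Submodule.span ℝ {w})ᗮ := by
    apply Submodule.eq_of_le_of_finrank_eq
    · intro v hv
      rw [Submodule.mem_orthogonal_singleton_iff_inner_right]
      exact hperp w hw v hv
    · rw [hort w hw0]; exact hPl₀
  have hmem : ∀ v : E3, ⟪w, v⟫ = 0 → P + v ∈ Pl₀ := by
    intro v hv
    have : v ∈ Pl₀.direction := by
      rw [hP0, Submodule.mem_orthogonal_singleton_iff_inner_right]; exact hv
    have h := AffineSubspace.vadd_mem_of_mem_direction this hPPl
    rwa [vadd_eq_add, add_comm] at h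
  have hCm : ∀ v : E3, ⟪w, v⟫ = 0 → ‖v‖ = ρ →
      P + v ∈ {x ∈ (Pl₀ : Set E3) | ‖x - P‖ = ρ} := by
    intro v hv hn
    refine ⟨hmem v hv, ?_⟩
    rw [add_sub_cancel_left, hn]
  have hQs : ‖Q - cSph‖ = rSph := hSph (Or.inr rfl)
  have hc : cSph - P = ((1 - ρ ^ 2 / ‖w‖ ^ 2) / 2) • w := by
    apply center_aux ⊤ (by rw [finrank_top, finrank_euclideanSpace_fin]; norm_num) w trivial hw0
      ρ hρ _ trivial rSph
    · intro v _ hv hn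
      have h : ‖(P + v) - cSph‖ = rSph := hSph (Or.inl (hCm v hv hn))
      rw [← h]; congr 1; abel
    · rw [← hQs, hwdef]; congr 1; abel
  have hcL : cSph ∈ L := by
    have h := AffineSubspace.vadd_mem_of_mem_direction (L.direction.smul_mem
      ((1 - ρ ^ 2 / ‖w‖ ^ 2) / 2) hw) hPL
    rwa [← hc, vadd_eq_add, sub_add_cancel] at h
  have main : ∀ Pl : AffineSubspace ℝ E3, IsPlane Pl → (L : Set E3) ⊆ (Pl : Set E3) →
      ∀ (C' : Set E3) (c' : E3) (r' : ℝ), 0 < r' → IsCircleIn Pl c' r' C' →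
        Q ∈ C' → (Pl : Set E3) ∩ {x ∈ (Pl₀ : Set E3) | ‖x - P‖ = ρ} ⊆ C' →
        C' ⊆ {x : E3 | ‖x - cSph‖ = rSph} ∧ r' = rSph := by
    rintro Pl hPl hLP C' c' r' hr' ⟨hc', -, rfl⟩ hQ hsub
    have hPP : P ∈ Pl := hLP hPL
    have hcc : c' - P = ((1 - ρ ^ 2 / ‖w‖ ^ 2) / 2) • w := by
      apply center_aux Pl.direction (le_of_eq hPl.symm) w
        (AffineSubspace.vsub_mem_direction (hLP hQL) hPP) hw0
        ρ hρ _ (AffineSubspace.vsub_mem_direction hc' hPP) r'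
      · intro v hvD hv hn
        have hPv : P + v ∈ Pl := by
          have h := AffineSubspace.vadd_mem_of_mem_direction hvD hPP
          rwa [vadd_eq_add, add_comm] at h
        have h : ‖(P + v) - c'‖ = r' := (hsub ⟨hPv, hCm v hv hn⟩).2
        rw [← h, vsub_eq_sub]; congr 1; abel
      · rw [← hQ.2, hwdef, vsub_eq_sub]; congr 1; abel
    have hce : c' = cSph := by
      rw [← hc] at hcc
      exact sub_left_injective hcc
    subst hce
    have hrr : r' = rSph := by rw [← hQs]; exact hQ.2.symm
    subst hrr
    exact ⟨fun x hx => hx.2, rfl⟩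
  refine ⟨main, ?_⟩
  apply Set.Subset.antisymm
  · intro x hx
    have hfr : finrank ℝ (Submodule.span ℝ {w, x - P}) ≤ 2 := by
      classical
      have h := finrank_span_finset_le_card (R := ℝ) ({w, x - P} : Finset E3)
      have h2 := Finset.card_le_two (a := w) (b := x - P)
      rw [Finset.coe_insert, Finset.coe_singleton] at h
      exact h.trans h2
    obtain ⟨n, hn, hn0⟩ : ∃ n ∈ (Submodule.span ℝ {w, x - P})ᗮ, n ≠ 0 := by
      apply Submodule.exists_mem_ne_zero_of_ne_bot
      intro hb
      have h := Submodule.finrank_add_finrank_orthogonal (Submodule.span ℝ {w, x - P})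
      rw [hb, finrank_bot, finrank_euclideanSpace_fin] at h
      omega
    have hin : ∀ y ∈ ({w, x - P} : Set E3), y ∈ (Submodule.span ℝ {n})ᗮ := by
      intro y hy
      rw [Submodule.mem_orthogonal_singleton_iff_inner_left]
      exact (Submodule.mem_orthogonal _ _).mp hn y (Submodule.subset_span hy)
    have hLP : (L : Set E3) ⊆ (AffineSubspace.mk' P (Submodule.span ℝ {n})ᗮ : Set E3) := by
      intro y hy
      rw [SetLike.mem_coe, AffineSubspace.mem_mk']
      have h1 : y -ᵥ P ∈ L.direction := AffineSubspace.vsub_mem_direction hy hPL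
      rw [← hLs] at h1
      exact (Submodule.span_singleton_le_iff_mem _ _).mpr (hin w (by simp)) h1
    refine ⟨AffineSubspace.mk' P (Submodule.span ℝ {n})ᗮ, ?_, hLP, _, cSph, rSph, hrSph,
      ⟨hLP hcL, hrSph.le, rfl⟩, ⟨hLP hQL, hQs⟩, ?_, ?_⟩
    · unfold IsPlane
      rw [AffineSubspace.direction_mk']
      exact hort n hn0
    · rintro y ⟨hy1, hy2⟩
      exact ⟨hy1, hSph (Or.inl hy2)⟩
    · refine ⟨?_, hx⟩
      rw [SetLike.mem_coe, AffineSubspace.mem_mk']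
      exact hin (x - P) (by simp)
  · rintro x ⟨Pl, hPl, hLP, C', c', r', hr', hC', hQ, hsub, hx⟩
    exact (main Pl hPl hLP C' c' r' hr' hC' hQ hsub).1 hx
end
end

section
/- Let S be a connected regular surface in ℝ³ and let Σ = {x ∈ ℝ³ | ‖x − c‖ = r} be a Euclidean sphere with r > 0 such that Σ ⊆ S. Then S = Σ. -/
noncomputable section

open Module
open scoped RealInnerProductSpace

open Filter Topology in
lemma chart_map_nhds {S : Set E3} {p : E3} {f : E2 → E3} {U : Set E2} (h : IsChartAt S p f U) :
    ∃ u ∈ U, f u = p ∧ map f (𝓝 u) = 𝓝[S] p := by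
  obtain ⟨hU, hf, hinj, ⟨u, hu, rfl⟩, ⟨W, hW, hWS⟩, φ, hφ⟩ := h
  refine ⟨u, hu, rfl, ?_⟩
  have hpW : f u ∈ W := by
    have : f u ∈ W ∩ S := hWS ▸ ⟨u, hu, rfl⟩
    exact this.1
  have h1 : 𝓝[S] (f u) = 𝓝[f '' U] (f u) := by
    rw [hWS, Set.inter_comm, nhdsWithin_inter_of_mem']
    exact mem_nhdsWithin_of_mem_nhds (hW.mem_nhds hpW)
  have e : φ ⟨u, hu⟩ = ⟨f u, ⟨u, hu, rfl⟩⟩ := Subtype.ext (hφ ⟨u, hu⟩)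
  have h2 : 𝓝[f '' U] (f u) = map Subtype.val (𝓝 (⟨f u, ⟨u, hu, rfl⟩⟩ : f '' U)) :=
    (map_nhds_subtype_val (s := f '' U) ⟨f u, ⟨u, hu, rfl⟩⟩).symm
  have h3 : 𝓝 u = map Subtype.val (𝓝 (⟨u, hu⟩ : U)) := by
    rw [map_nhds_subtype_val, hU.nhdsWithin_eq hu]
  rw [h1, h2, ← e, ← φ.map_nhds_eq, h3, map_map, map_map]
  congr 1
  funext x
  exact (hφ x).symm

open Filter Topology in
lemma sphere_param (c p : E3) (r : ℝ) (hr : 0 < r) (hp : ‖p - c‖ = r) :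
    ∃ (σ : E2 → E3) (B : E3 →L[ℝ] E2), σ 0 = p ∧ ContDiffAt ℝ 1 σ 0 ∧
      (∀ᶠ w in 𝓝 0, ‖σ w - c‖ = r) ∧ ∀ w, B (σ w - c) = w := by
  have hv : p - c ≠ 0 := by
    intro h; rw [h, norm_zero] at hp; exact hr.ne hp
  haveI : Fact (finrank ℝ E3 = 2 + 1) := ⟨by simp⟩
  let b := (OrthonormalBasis.fromOrthogonalSpanSingleton (𝕜 := ℝ) 2 hv).repr
  set K := (ℝ ∙ (p - c))ᗮ with hK
  let A : E2 →L[ℝ] E3 := K.subtypeL ∘L (b.symm.toContinuousLinearEquiv : E2 →L[ℝ] K)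
  let B : E3 →L[ℝ] E2 := (b.toContinuousLinearEquiv : K →L[ℝ] E2) ∘L K.orthogonalProjection
  have hA : ∀ w, ‖A w‖ = ‖w‖ := fun w => b.symm.norm_map w
  have hAo : ∀ w, ⟪p - c, A w⟫ = 0 := fun w =>
    (Submodule.mem_orthogonal_singleton_iff_inner_right).1 (b.symm w).2
  have hBA : ∀ w, B (A w) = w := by
    intro w
    have : K.orthogonalProjection (A w) = b.symm w :=
      Submodule.orthogonalProjection_mem_subspace_eq_self (b.symm w)
    change b (K.orthogonalProjection (A w)) = w
    rw [this, b.apply_symm_apply]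
  have hBv : B (p - c) = 0 := by
    have : K.orthogonalProjection (p - c) = 0 := by
      apply Submodule.orthogonalProjection_mem_subspace_orthogonalComplement_eq_zero
      exact Submodule.le_orthogonal_orthogonal _ (Submodule.mem_span_singleton_self _)
    change b (K.orthogonalProjection (p - c)) = 0
    rw [this, map_zero]
  refine ⟨fun w => c + (Real.sqrt (1 - ‖w‖ ^ 2 / r ^ 2) • (p - c) + A w), B, ?_, ?_, ?_, ?_⟩
  · simp
  · have hs : ContDiffAt ℝ 1 (fun w : E2 => Real.sqrt (1 - ‖w‖ ^ 2 / r ^ 2)) 0 := by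
      refine ContDiffAt.sqrt ?_ (by simp)
      exact contDiffAt_const.sub ((contDiff_norm_sq ℝ).contDiffAt.div_const _)
    exact contDiffAt_const.add ((hs.smul (contDiffAt_const (c := p - c))).add
      A.contDiff.contDiffAt)
  · filter_upwards [Metric.ball_mem_nhds (0 : E2) hr] with w hw
    have hw : ‖w‖ < r := by simpa using hw
    have h0 : 0 ≤ 1 - ‖w‖ ^ 2 / r ^ 2 := by
      rw [sub_nonneg, div_le_one (by positivity)]
      gcongr
    rw [add_sub_cancel_left]
    have : ‖Real.sqrt (1 - ‖w‖ ^ 2 / r ^ 2) • (p - c) + A w‖ ^ 2 = r ^ 2 := by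
      rw [norm_add_sq_real, norm_smul, hA, inner_smul_left, hAo, mul_pow, hp, Real.norm_eq_abs,
        sq_abs, Real.sq_sqrt h0]
      field_simp
      ring
    exact (sq_eq_sq₀ (norm_nonneg _) hr.le).1 this
  · intro w
    simp [hBA, hBv, -map_sub]

open Filter Topology in
lemma sphere_mem_nhdsWithin (S : Set E3) (c p : E3) (r : ℝ) (hr : 0 < r)
    (hsub : {x : E3 | ‖x - c‖ = r} ⊆ S) (hp : ‖p - c‖ = r) (hreg : IsRegularSurface S) :
    {x : E3 | ‖x - c‖ = r} ∈ 𝓝[S] p := by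
  obtain ⟨f, U, hch⟩ := hreg p (hsub hp)
  obtain ⟨u, hu, hfu, hmap⟩ := chart_map_nhds hch
  obtain ⟨hU, hf, hinj, -⟩ := hch
  obtain ⟨σ, B, hσ0, hσ, hσS, hB⟩ := sphere_param c p r hr hp
  have hfs : HasStrictFDerivAt f (fderiv ℝ f u) u :=
    ((hf.contDiffAt (hU.mem_nhds hu)).hasStrictFDerivAt (by simp))
  obtain ⟨L0, hL0⟩ := (fderiv ℝ f u : E2 →ₗ[ℝ] E3).exists_leftInverse_of_injective
    (LinearMap.ker_eq_bot.2 (hinj u hu))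
  let L : E3 →L[ℝ] E2 := LinearMap.toContinuousLinearMap L0
  have hL : L ∘L fderiv ℝ f u = ((ContinuousLinearEquiv.refl ℝ E2 : E2 ≃L[ℝ] E2) : E2 →L[ℝ] E2) := by
    ext1 w
    exact LinearMap.congr_fun hL0 w
  have hLf : HasStrictFDerivAt (fun x => L (f x))
      ((ContinuousLinearEquiv.refl ℝ E2 : E2 ≃L[ℝ] E2) : E2 →L[ℝ] E2) u :=
    hL ▸ L.hasStrictFDerivAt.comp u hfs
  let g := hLf.localInverse _ _ _
  have hg : ∀ᶠ x in 𝓝 u, g (L (f x)) = x := hLf.eventually_left_inverse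
  have hg' : HasStrictFDerivAt g _ (L (f u)) := hLf.to_localInverse
  have hgu : g (L (f u)) = u := hg.self_of_nhds
  have hfg : ∀ᶠ q in 𝓝[S] p, f (g (L q)) = q := by
    rw [← hmap, eventually_map]
    filter_upwards [hg] with x hx
    rw [hx]
  have hσt : Tendsto σ (𝓝 0) (𝓝[S] p) := by
    refine tendsto_nhdsWithin_iff.2 ⟨hσ0 ▸ hσ.continuousAt, ?_⟩
    filter_upwards [hσS] with w hw using hsub hw
  have hfh : ∀ᶠ w in 𝓝 0, f (g (L (σ w))) = σ w := hσt.eventually hfg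
  have hσd : HasStrictFDerivAt σ (fderiv ℝ σ 0) 0 := hσ.hasStrictFDerivAt (by simp)
  have hLσ : HasStrictFDerivAt (fun w => L (σ w)) (L ∘L fderiv ℝ σ 0) 0 :=
    L.hasStrictFDerivAt.comp 0 hσd
  have hpt : L (σ 0) = L (f u) := by rw [hσ0, hfu]
  rw [← hpt] at hg' 
  have hh := hg'.comp (f := fun w => L (σ w)) 0 hLσ
  obtain ⟨h', hh'⟩ : ∃ h', HasStrictFDerivAt (fun w => g (L (σ w))) h' 0 := ⟨_, hh⟩
  have h0 : g (L (σ 0)) = u := by rw [hpt, hgu]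
  have hfs0 : HasFDerivAt f (fderiv ℝ f u) (g (L (σ 0))) := by rw [h0]; exact hfs.hasFDerivAt
  have hd1 : HasFDerivAt (fun w => B (f (g (L (σ w))) - c)) (B ∘L (fderiv ℝ f u ∘L h')) 0 :=
    B.hasFDerivAt.comp 0 ((hfs0.comp (f := fun w => g (L (σ w))) 0 hh'.hasFDerivAt).sub_const c)
  have hd2 : HasFDerivAt (fun w : E2 => w) (B ∘L (fderiv ℝ f u ∘L h')) 0 := by
    refine hd1.congr_of_eventuallyEq ?_
    filter_upwards [hfh] with w hw
    rw [hw, hB]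
  have hid := hd2.unique (hasFDerivAt_id _)
  have hinj' : Function.Injective (h' : E2 →ₗ[ℝ] E2) := by
    intro x y hxy
    have hxy : h' x = h' y := hxy
    have h1 := DFunLike.congr_fun hid x
    have h2 := DFunLike.congr_fun hid y
    simp only [ContinuousLinearMap.comp_apply, ContinuousLinearMap.id_apply] at h1 h2
    rw [← h1, ← h2, hxy]
  have hsurj : (h' : E2 →ₗ[ℝ] E2).range = ⊤ :=
    LinearMap.range_eq_top.2 (LinearMap.injective_iff_surjective.1 hinj')
  have hm := hh'.map_nhds_eq_of_surj hsurj
  rw [h0] at hm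
  rw [← hmap, ← hm, map_map, mem_map]
  filter_upwards [hfh, hσS] with w hw hw'
  simp only [Set.mem_preimage, Function.comp_apply, Set.mem_setOf_eq]
  rw [hw, hw']

/-- A connected regular surface containing a Euclidean sphere equals it. -/
theorem surface_containing_sphere (S : Set E3) (hconn : IsConnected S)
    (hreg : IsRegularSurface S)
    (c : E3) (r : ℝ) (hr : 0 < r) (hsub : {x : E3 | ‖x - c‖ = r} ⊆ S) :
    S = {x : E3 | ‖x - c‖ = r} := by
  refine Set.Subset.antisymm ?_ hsub
  haveI : PreconnectedSpace S := Subtype.preconnectedSpace hconn.isPreconnected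
  have hclopen : IsClopen {x : S | ‖(x : E3) - c‖ = r} := by
    constructor
    · exact isClosed_eq (by fun_prop) continuous_const
    · rw [isOpen_iff_mem_nhds]
      intro x hx
      have := sphere_mem_nhdsWithin S c x r hr hsub hx hreg
      exact preimage_coe_mem_nhds_subtype.2 this
  have hne : ({x : S | ‖(x : E3) - c‖ = r}).Nonempty := by
    obtain ⟨v, hv⟩ := (NormedSpace.sphere_nonempty (E := E3) (x := c) (r := r)).2 hr.le
    have hv : ‖v - c‖ = r := by simpa [dist_eq_norm] using hv
    exact ⟨⟨v, hsub hv⟩, hv⟩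
  have := hclopen.eq_univ hne
  intro x hx
  have h : (⟨x, hx⟩ : S) ∈ {x : S | ‖(x : E3) - c‖ = r} := this ▸ Set.mem_univ _
  exact h
end
end

section
/- Let S be a nonempty regular surface in ℝ³ satisfying property 𝒫, and let Q ∈ S. Then there exists a plane Π₀ parallel to the tangent plane of S at Q (i.e., whose direction equals the tangent plane of S at Q) such that Π₀ ∩ S is a non-degenerate circle. -/
noncomputable section

open Module
open scoped RealInnerProductSpace

theorem no_inj_aux (g : E2 → ℝ) (hg : Continuous g) (hi : Function.Injective g) : False := by
  have key : ∀ x y : E2, g x < g y → False := by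
    intro x y hxy
    have h1 : (g x + g y) / 2 ∈ Set.range g :=
      mem_range_of_exists_le_of_exists_ge hg ⟨x, by linarith⟩ ⟨y, by linarith⟩
    obtain ⟨z, hz⟩ := h1
    have hc : IsPreconnected ({z}ᶜ : Set E2) := by
      refine (isConnected_compl_singleton_of_one_lt_rank ?_ z).isPreconnected
      rw [← Module.finrank_eq_rank]
      simp
    have hx : x ∈ ({z}ᶜ : Set E2) := by
      intro h
      rw [Set.mem_singleton_iff] at h
      rw [← h] at hz; linarith
    have hy : y ∈ ({z}ᶜ : Set E2) := by
      intro h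
      rw [Set.mem_singleton_iff] at h
      rw [← h] at hz; linarith
    obtain ⟨w, hw, hwz⟩ := hc.intermediate_value hx hy hg.continuousOn
      (show g z ∈ Set.Icc (g x) (g y) from ⟨by linarith, by linarith⟩)
    exact hw (hi hwz)
  obtain ⟨x, y, hxy⟩ := exists_pair_ne E2
  rcases lt_or_gt_of_ne (fun h => hxy (hi h)) with h | h
  · exact key _ _ h
  · exact key _ _ h

/-- For a nonempty regular surface `S` with property 𝒫 and `Q ∈ S`,
some plane parallel to the tangent plane of `S` at `Q` meets `S` in a
non-degenerate circle. -/
theorem exists_parallel_plane_nondegenerate_circle (S : Set E3) (hne : S.Nonempty)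
    (hreg : IsRegularSurface S) (hP : PropertyP S) (Q : E3) (hQ : Q ∈ S)
    (f : E2 → E3) (U : Set E2) (hchart : IsChartAt S Q f U)
    (u : E2) (hu : u ∈ U) (hfu : f u = Q) :
    ∃ Pl₀ : AffineSubspace ℝ E3, IsPlane Pl₀ ∧ Pl₀.direction = TangentPlane f u ∧
      ∃ (c : E3) (r : ℝ), 0 < r ∧ IsCircleIn Pl₀ c r ((Pl₀ : Set E3) ∩ S) := by
  obtain ⟨hUo, hsm, hinj, -, ⟨W, hWo, hW⟩, φ, hφ⟩ := hchart
  have hT : finrank ℝ (TangentPlane f u) = 2 := by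
    have := LinearMap.finrank_range_of_inj (f := (fderiv ℝ f u : E2 →ₗ[ℝ] E3)) (hinj u hu)
    rw [TangentPlane, this]; simp
  have hfinj : Set.InjOn f U := by
    intro a ha b hb hab
    have : φ ⟨a, ha⟩ = φ ⟨b, hb⟩ := by
      apply Subtype.ext; rw [hφ, hφ]; exact hab
    simpa using φ.injective this
  have hfS : ∀ v ∈ U, f v ∈ S := fun v hv => by
    have : f v ∈ W ∩ S := hW ▸ Set.mem_image_of_mem f hv
    exact this.2
  by_contra hcon
  have hsing : ∀ v ∈ U, ∀ w ∈ U, f w - f v ∈ TangentPlane f u → v = w := by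
    intro v hv w hw hvw
    have hdir : (AffineSubspace.mk' (f v) (TangentPlane f u)).direction = TangentPlane f u :=
      AffineSubspace.direction_mk' _ _
    have hpl : IsPlane (AffineSubspace.mk' (f v) (TangentPlane f u)) := by
      rw [IsPlane, hdir]; exact hT
    have hv1 : f v ∈ ((AffineSubspace.mk' (f v) (TangentPlane f u) : Set E3) ∩ S) :=
      ⟨AffineSubspace.self_mem_mk' _ _, hfS v hv⟩
    have hw1 : f w ∈ ((AffineSubspace.mk' (f v) (TangentPlane f u) : Set E3) ∩ S) :=
      ⟨by simpa [AffineSubspace.mem_mk'] using hvw, hfS w hw⟩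
    obtain ⟨c, r, hcr⟩ := hP _ hpl ⟨_, hv1⟩
    have hr : r = 0 := by
      by_contra h
      exact hcon ⟨_, hpl, hdir, c, r, lt_of_le_of_ne hcr.2.1 (Ne.symm h), hcr⟩
    rw [hcr.2.2, hr] at hv1 hw1
    have e1 := sub_eq_zero.mp (norm_eq_zero.mp hv1.2)
    have e2 := sub_eq_zero.mp (norm_eq_zero.mp hw1.2)
    exact hfinj hv hw (e1.trans e2.symm)
  have hlt : TangentPlane f u < ⊤ := by
    rw [lt_top_iff_ne_top]
    intro h
    rw [h] at hT
    simp at hT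
  obtain ⟨l, hl0, hl⟩ := Submodule.exists_le_ker_of_lt_top _ hlt
  have hker : TangentPlane f u = LinearMap.ker l := by
    apply Submodule.eq_of_le_of_finrank_eq hl
    have h1 := Module.Dual.finrank_ker_add_one_of_ne_zero hl0
    simp at h1
    omega
  obtain ⟨ε, hε, hball⟩ := Metric.isOpen_iff.mp hUo u hu
  have hb : ∀ x, OpenPartialHomeomorph.univBall u ε x ∈ U := fun x => hball (by
    rw [← OpenPartialHomeomorph.univBall_target u hε]
    exact (OpenPartialHomeomorph.univBall u ε).map_source (by simp))
  apply no_inj_aux (fun x => l (f (OpenPartialHomeomorph.univBall u ε x)))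
  · exact l.continuous_of_finiteDimensional.comp
      (hsm.continuousOn.comp_continuous (OpenPartialHomeomorph.continuous_univBall u ε) hb)
  · intro x y hxy
    have h1 := hsing _ (hb x) _ (hb y) (by
      rw [hker, LinearMap.mem_ker, map_sub, sub_eq_zero]; exact hxy.symm)
    exact (OpenPartialHomeomorph.univBall u ε).injOn (by simp) (by simp) h1
end
end

section
/- Let S be a nonempty connected spacelike regular surface in Minkowski space 𝕃³ satisfying property 𝒫*, let Π₀ be a spacelike plane such that C = Π₀ ∩ S is a non-degenerate circle with center P, and let L be the line through P in the direction ⟨·,·⟩₁-orthogonal to the direction of Π₀. Then L ∩ S ≠ ∅. -/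
noncomputable section

open Module
open scoped RealInnerProductSpace

open Filter Topology Asymptotics in
theorem tangent_aux (S : Set E3) (hreg : IsSpacelikeSurface S) (q : E3) (hq : q ∈ S) :
    ∃ T : Submodule ℝ E3, (∀ v ∈ T, v ≠ 0 → 0 < mink v v) ∧
      ∀ (γ : ℝ → E3) (v : E3), HasDerivAt γ v 0 → γ 0 = q → (∀ᶠ t in 𝓝 (0:ℝ), γ t ∈ S) →
        v ∈ T := by
  classical
  obtain ⟨f, U, ⟨hU, hf, hinj, ⟨u0, hu0, hfu0⟩, ⟨W, hW, hWS⟩, φ, hφ⟩, hT⟩ := hreg q hq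
  refine ⟨TangentPlane f u0, (hT u0 hu0 hfu0).2, ?_⟩
  intro γ v hγ hγ0 hS
  have hqW : q ∈ W := by
    have : q ∈ f '' U := ⟨u0, hu0, hfu0⟩
    rw [hWS] at this; exact this.1
  have hcont : Tendsto γ (𝓝 0) (𝓝 q) := by
    have := hγ.continuousAt.tendsto; rwa [hγ0] at this
  have hev : ∀ᶠ t in 𝓝 (0:ℝ), γ t ∈ f '' U := by
    filter_upwards [hS, hcont.eventually (hW.mem_nhds hqW)] with t h1 h2
    rw [hWS]; exact ⟨h2, h1⟩
  let g : ℝ → U := fun t => if h : γ t ∈ f '' U then φ.symm ⟨γ t, h⟩ else ⟨u0, hu0⟩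
  have hfg : ∀ᶠ t in 𝓝 (0:ℝ), f (g t) = γ t := by
    filter_upwards [hev] with t ht
    have : g t = φ.symm ⟨γ t, ht⟩ := by simp only [g]; rw [dif_pos ht]
    rw [this, ← hφ, φ.apply_symm_apply]
  have hind : IsInducing (fun u : U => f u) := by
    have : (fun u : U => f u) = Subtype.val ∘ φ := by
      funext u; exact (hφ u).symm
    rw [this]
    exact IsInducing.subtypeVal.comp φ.isInducing
  have hg : Tendsto g (𝓝 0) (𝓝 ⟨u0, hu0⟩) := by
    rw [hind.tendsto_nhds_iff]
    simp only [hfu0]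
    exact hcont.congr' (by filter_upwards [hfg] with t ht; exact ht.symm)
  have hg' : Tendsto (fun t => (g t : E2)) (𝓝 0) (𝓝 u0) :=
    (continuous_subtype_val.tendsto _).comp hg
  have hD : HasFDerivAt f (fderiv ℝ f u0) u0 :=
    ((hf.contDiffAt (hU.mem_nhds hu0)).differentiableAt (by simp)).hasFDerivAt
  set D := fderiv ℝ f u0 with hDdef
  obtain ⟨K, hK, hanti⟩ := (D : E2 →ₗ[ℝ] E3).exists_antilipschitzWith
    (LinearMap.ker_eq_bot.2 (hinj u0 hu0))
  have hbig := (hD.isTheta_sub (hanti.isInducing D.continuous)).symm.isBigO.comp_tendsto hg'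
  have hlit := hD.isLittleO.comp_tendsto hg'
  have hγO : (fun t => γ t - q) =O[𝓝 0] (fun t : ℝ => t) := by
    have := hγ.isBigO_sub
    simpa [hγ0] using this
  have hfgO : (fun t => f (g t) - f u0) =O[𝓝 0] (fun t : ℝ => t) := by
    refine hγO.congr' ?_ EventuallyEq.rfl
    filter_upwards [hfg] with t ht
    rw [ht, hfu0]
  have hgO : (fun t => (g t : E2) - u0) =O[𝓝 0] (fun t : ℝ => t) := hbig.trans hfgO
  have hlo : (fun t => f (g t) - f u0 - D (g t - u0)) =o[𝓝 0] (fun t : ℝ => t) :=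
    hlit.trans_isBigO hgO
  have hγo : (fun t => γ t - q - t • v) =o[𝓝 0] (fun t : ℝ => t) := by
    have := hγ.isLittleO
    simpa [hγ0] using this
  have hsub : (fun t => D (g t - u0) - t • v) =o[𝓝 0] (fun t : ℝ => t) := by
    refine (hγo.sub hlo).congr' ?_ EventuallyEq.rfl
    filter_upwards [hfg] with t ht
    rw [ht, hfu0]; abel
  have hlim : Tendsto (fun t : ℝ => t⁻¹ • (D (g t - u0) - t • v)) (𝓝[≠] 0) (𝓝 0) :=
    (hsub.mono nhdsWithin_le_nhds).tendsto_inv_smul_nhds_zero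
  have hlim2 : Tendsto (fun t : ℝ => D (t⁻¹ • ((g t : E2) - u0))) (𝓝[≠] 0) (𝓝 v) := by
    have := hlim.add_const v
    rw [zero_add] at this
    refine this.congr' ?_
    filter_upwards [self_mem_nhdsWithin] with t ht
    have ht : t ≠ 0 := ht
    rw [map_smul, smul_sub, smul_smul, inv_mul_cancel₀ ht, one_smul]; abel
  have hclosed : IsClosed (TangentPlane f u0 : Set E3) := Submodule.closed_of_finiteDimensional _
  exact hclosed.mem_of_tendsto hlim2 (Eventually.of_forall fun t => ⟨_, rfl⟩)

theorem mink_add_left (x y z : E3) : mink (x + y) z = mink x z + mink y z := by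
  simp [mink]; ring
theorem mink_add_right (x y z : E3) : mink z (x + y) = mink z x + mink z y := by
  simp [mink]; ring
theorem mink_smul_left (a : ℝ) (x z : E3) : mink (a • x) z = a * mink x z := by
  simp [mink]; ring
theorem mink_smul_right (a : ℝ) (x z : E3) : mink z (a • x) = a * mink z x := by
  simp [mink]; ring
theorem mink_comm (x z : E3) : mink x z = mink z x := by
  simp [mink]; ring

theorem mink_comb2 (u w : E3) (k : ℝ) (huu : mink u u = 1) (huw : mink u w = 0)
    (hww : mink w w = k) (a b : ℝ) :
    mink (a • u + b • w) (a • u + b • w) = a ^ 2 + k * b ^ 2 := by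
  have : mink w u = 0 := by rw [mink_comm]; exact huw
  simp only [mink_add_left, mink_add_right, mink_smul_left, mink_smul_right, huu, huw, hww, this]
  ring

theorem indep_aux (u w : E3) (k : ℝ) (hk : 0 < k) (huu : mink u u = 1) (huw : mink u w = 0)
    (hww : mink w w = k) : LinearIndependent ℝ ![u, w] := by
  rw [LinearIndependent.pair_iff]
  intro s t h
  have h2 := mink_comb2 u w k huu huw hww s t
  rw [h] at h2
  have h3 : mink (0:E3) 0 = 0 := by simp [mink]
  rw [h3] at h2
  have ht : t = 0 := by
    have : t ^ 2 = 0 := by nlinarith [sq_nonneg s, sq_nonneg t]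
    simpa using this
  have hs : s = 0 := by
    have : s ^ 2 = 0 := by nlinarith [sq_nonneg s, sq_nonneg t]
    simpa using this
  exact ⟨hs, ht⟩

theorem circle_eq (S : Set E3) (hP : PropertyPStar S) (p u w : E3) (k : ℝ) (hk : 0 < k)
    (huu : mink u u = 1) (huw : mink u w = 0) (hww : mink w w = k) (x0 y0 : ℝ)
    (h0 : p + (x0 • u + y0 • w) ∈ S) :
    ∃ α β γ : ℝ, ∀ x y : ℝ, p + (x • u + y • w) ∈ S ↔
      x ^ 2 + k * y ^ 2 + α * x + β * y + γ = 0 := by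
  set Pl := AffineSubspace.mk' p (Submodule.span ℝ {u, w}) with hPl
  have hmem : ∀ x y : ℝ, p + (x • u + y • w) ∈ Pl := by
    intro x y
    rw [hPl, AffineSubspace.mem_mk']
    simp only [vsub_eq_sub, add_sub_cancel_left]
    exact Submodule.mem_span_pair.2 ⟨x, y, rfl⟩
  have hsp : IsSpacelikePlane Pl := by
    constructor
    · have hi := indep_aux u w k hk huu huw hww
      have := finrank_span_eq_card hi
      have hr : Set.range ![u, w] = {u, w} := by simp [Matrix.range_cons, Set.pair_comm]
      rw [hr] at this
      rw [IsPlane, hPl, AffineSubspace.direction_mk']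
      simpa using this
    · intro v hv hv0
      rw [hPl, AffineSubspace.direction_mk'] at hv
      obtain ⟨a, b, rfl⟩ := Submodule.mem_span_pair.1 hv
      rw [mink_comb2 u w k huu huw hww]
      by_contra hn
      have hb : b = 0 := by
        have : b ^ 2 = 0 := by nlinarith [sq_nonneg a, sq_nonneg b]
        simpa using this
      have ha : a = 0 := by
        have : a ^ 2 = 0 := by nlinarith [sq_nonneg a, sq_nonneg b]
        simpa using this
      simp [ha, hb] at hv0
  obtain ⟨c, R, hc, hR, hcirc⟩ := hP Pl hsp ⟨_, hmem x0 y0, h0⟩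
  rw [hPl, AffineSubspace.mem_mk'] at hc
  obtain ⟨a, b, hab⟩ := Submodule.mem_span_pair.1 hc
  have hc' : c = p + (a • u + b • w) := by rw [hab]; simp
  refine ⟨-2 * a, -2 * k * b, a ^ 2 + k * b ^ 2 - R ^ 2, fun x y => ?_⟩
  have h1 : p + (x • u + y • w) ∈ S ↔ p + (x • u + y • w) ∈ (Pl : Set E3) ∩ S :=
    ⟨fun h => ⟨hmem x y, h⟩, fun h => h.2⟩
  rw [h1, hcirc]
  have h2 : p + (x • u + y • w) - c = (x - a) • u + (y - b) • w := by
    rw [hc']; module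
  simp only [Set.mem_ofPred_eq, SetLike.mem_coe, h2, mink_comb2 u w k huu huw hww]
  constructor
  · rintro ⟨_, h⟩; linarith
  · intro h; exact ⟨hmem x y, by linarith⟩

theorem frame_aux (V M : Submodule ℝ E3) (hV : finrank ℝ V = 2)
    (hpos : ∀ v ∈ V, v ≠ 0 → 0 < mink v v) (hM : finrank ℝ M = 1)
    (horth : ∀ v ∈ M, ∀ w ∈ V, mink v w = 0) :
    ∃ e1 e2 e3 : E3, e1 ∈ V ∧ e2 ∈ V ∧ e3 ∈ M ∧ mink e1 e1 = 1 ∧ mink e2 e2 = 1 ∧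
      mink e3 e3 = -1 ∧ mink e1 e2 = 0 ∧ mink e1 e3 = 0 ∧ mink e2 e3 = 0 := by
  have hnorm : ∀ v : E3, 0 < mink v v →
      mink ((Real.sqrt (mink v v))⁻¹ • v) ((Real.sqrt (mink v v))⁻¹ • v) = 1 := by
    intro v hv
    rw [mink_smul_left, mink_smul_right]
    have := Real.mul_self_sqrt hv.le
    have h2 := Real.sqrt_pos.2 hv
    generalize Real.sqrt (mink v v) = s at *
    rw [← this]; field_simp
  let b := Module.finBasisOfFinrankEq ℝ V hV
  have hli : LinearIndependent ℝ ![(b 0 : E3), (b 1 : E3)] := by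
    have := b.linearIndependent.map' V.subtype (Submodule.ker_subtype _)
    have he : ![(b 0 : E3), (b 1 : E3)] = V.subtype ∘ b := by
      funext i; fin_cases i <;> rfl
    rw [he]; exact this
  rw [LinearIndependent.pair_iff] at hli
  have hb0 : (b 0 : E3) ≠ 0 := by
    intro h
    have := hli 1 0 (by simp [h])
    simp at this
  have hp0 := hpos _ (b 0).2 hb0
  set e1 := (Real.sqrt (mink (b 0 : E3) (b 0)))⁻¹ • (b 0 : E3) with he1
  have h11 : mink e1 e1 = 1 := hnorm _ hp0
  have he1V : e1 ∈ V := V.smul_mem _ (b 0).2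
  set w := (b 1 : E3) - mink e1 (b 1) • e1 with hw
  have hwV : w ∈ V := V.sub_mem (b 1).2 (V.smul_mem _ he1V)
  have hw0 : w ≠ 0 := by
    intro h
    rw [hw, he1, smul_smul] at h
    have := hli (-(mink e1 (b 1) * (Real.sqrt (mink (b 0 : E3) (b 0)))⁻¹)) 1
      (by rw [← h, ← he1]; module)
    simp at this
  have h1w : mink e1 w = 0 := by
    have : w = (b 1 : E3) + (-mink e1 (b 1)) • e1 := by rw [hw]; module
    rw [this, mink_add_right, mink_smul_right, h11]; ring
  have hpw := hpos _ hwV hw0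
  set e2 := (Real.sqrt (mink w w))⁻¹ • w with he2
  have h22 : mink e2 e2 = 1 := hnorm _ hpw
  have he2V : e2 ∈ V := V.smul_mem _ hwV
  have h12 : mink e1 e2 = 0 := by rw [he2, mink_smul_right, h1w, mul_zero]
  have : Nontrivial M := Module.nontrivial_of_finrank_pos (R := ℝ) (by omega)
  obtain ⟨⟨n, hnM⟩, hn0⟩ := exists_ne (0 : M)
  have hn0 : n ≠ 0 := fun h => hn0 (by ext1; exact h)
  have h1n : mink e1 n = 0 := by rw [mink_comm]; exact horth n hnM e1 he1V
  have h2n : mink e2 n = 0 := by rw [mink_comm]; exact horth n hnM e2 he2V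
  have h21 : mink e2 e1 = 0 := by rw [mink_comm]; exact h12
  have hn1 : mink n e1 = 0 := by rw [mink_comm]; exact h1n
  have hn2 : mink n e2 = 0 := by rw [mink_comm]; exact h2n
  have hneg : mink n n < 0 := by
    by_contra hge
    push Not at hge
    have hli3 : LinearIndependent ℝ ![e1, e2, n] := by
      rw [Fintype.linearIndependent_iff]
      intro g hg
      simp [Fin.sum_univ_three] at hg
      have z1 : ∀ x : E3, mink x 0 = 0 := by intro x; simp [mink]
      have a0 : g 0 = 0 := by
        have := z1 e1
        rw [← hg] at this
        simpa [mink_add_right, mink_smul_right, h11, h12, h1n] using this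
      have a1 : g 1 = 0 := by
        have := z1 e2
        rw [← hg] at this
        simpa [mink_add_right, mink_smul_right, h22, h21, h2n] using this
      have a2 : g 2 = 0 := by
        simpa [a0, a1, hn0] using hg
      intro i; fin_cases i <;> assumption
    have hspan := hli3.span_eq_top_of_card_eq_finrank (by simp)
    have hmem : (EuclideanSpace.single 2 1 : E3) ∈ Submodule.span ℝ (Set.range ![e1, e2, n]) := by
      rw [hspan]; trivial
    obtain ⟨c, hc⟩ := (Submodule.mem_span_range_iff_exists_fun ℝ).1 hmem
    have hm : mink (EuclideanSpace.single 2 1 : E3) (EuclideanSpace.single 2 1 : E3) = -1 := by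
      simp [mink]
    rw [← hc] at hm
    simp [Fin.sum_univ_three, mink_add_left, mink_add_right, mink_smul_left, mink_smul_right,
      h11, h12, h1n, h21, h22, h2n, hn1, hn2] at hm
    nlinarith [mul_self_nonneg (c 0), mul_self_nonneg (c 1),
      mul_nonneg (mul_self_nonneg (c 2)) hge]
  refine ⟨e1, e2, (Real.sqrt (-mink n n))⁻¹ • n, he1V, he2V, M.smul_mem _ hnM, h11, h22, ?_, h12,
    ?_, ?_⟩
  · rw [mink_smul_left, mink_smul_right]
    have h1 := Real.mul_self_sqrt (neg_pos.2 hneg).le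
    have h2 := Real.sqrt_pos.2 (neg_pos.2 hneg)
    generalize Real.sqrt (-mink n n) = s at *
    have : mink n n = -(s * s) := by linarith
    rw [this]; field_simp
  · rw [mink_smul_right, h1n, mul_zero]
  · rw [mink_smul_right, h2n, mul_zero]

theorem region_aux (S : Set E3) (hreg : IsSpacelikeSurface S) (hP : PropertyPStar S)
    (P e1 e2 e3 : E3) (r : ℝ) (hr : 0 < r)
    (h11 : mink e1 e1 = 1) (h22 : mink e2 e2 = 1) (h33 : mink e3 e3 = -1)
    (h12 : mink e1 e2 = 0) (h13 : mink e1 e3 = 0) (h23 : mink e2 e3 = 0)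
    (hC : ∀ x y : ℝ, x ^ 2 + y ^ 2 = r ^ 2 → P + (x • e1 + y • e2) ∈ S) :
    ∃ m : ℝ, 1 < m ^ 2 ∧ ∀ a x y : ℝ, a ^ 2 < 1 → 
      x ^ 2 + (1 - a ^ 2) * y ^ 2 - 2 * r * m * a * y - r ^ 2 = 0 →
      P + (x • e1 + y • (e2 + a • e3)) ∈ S := by
  have hq : P + r • e1 ∈ S := by simpa using hC r 0 (by ring)
  have hq' : P + (-r) • e1 ∈ S := by simpa using hC (-r) 0 (by ring)
  obtain ⟨T, hTpos, hT⟩ := tangent_aux S hreg _ hq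
  have h32 : mink e3 e2 = 0 := by rw [mink_comm]; exact h23
  have h31 : mink e3 e1 = 0 := by rw [mink_comm]; exact h13
  -- circles
  have key : ∀ a : ℝ, a ^ 2 < 1 → ∃ β : ℝ, (∀ x y : ℝ, P + (x • e1 + y • (e2 + a • e3)) ∈ S ↔
      x ^ 2 + (1 - a ^ 2) * y ^ 2 + β * y - r ^ 2 = 0) ∧
      (-β / (2 * r)) • e1 + (e2 + a • e3) ∈ T := by
    intro a ha
    have hww : mink (e2 + a • e3) (e2 + a • e3) = 1 - a ^ 2 := by
      simp only [mink_add_left, mink_add_right, mink_smul_left, mink_smul_right, h22, h33, h23, h32]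
      ring
    have huw : mink e1 (e2 + a • e3) = 0 := by
      simp [mink_add_right, mink_smul_right, h12, h13]
    obtain ⟨α, β, γ, h⟩ := circle_eq S hP P e1 (e2 + a • e3) (1 - a ^ 2) (by linarith) h11 huw hww
      r 0 (by simpa using hq)
    have e1' := (h r 0).1 (by simpa using hq)
    have e2' := (h (-r) 0).1 (by simpa using hq')
    have hα : α = 0 := by
      have : α * r = 0 := by linarith
      rcases mul_eq_zero.1 this with h | h
      · exact h
      · linarith
    have hγ : γ = -r ^ 2 := by rw [hα] at e1'; linarith
    subst hα hγ
    have hS : ∀ x y : ℝ, P + (x • e1 + y • (e2 + a • e3)) ∈ S ↔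
      x ^ 2 + (1 - a ^ 2) * y ^ 2 + β * y - r ^ 2 = 0 := by
      intro x y; rw [h]
      constructor <;> intro h <;> linarith
    refine ⟨β, hS, ?_⟩
    let ρ : ℝ → ℝ := fun t => r ^ 2 - (1 - a ^ 2) * t ^ 2 - β * t
    have hρ0 : ρ 0 = r ^ 2 := by simp [ρ]
    have hρ : HasDerivAt ρ (-β) 0 := by
      have := (((hasDerivAt_id (0:ℝ)).pow 2).const_mul (1 - a ^ 2)).const_sub (r ^ 2) |>.sub
        ((hasDerivAt_id (0:ℝ)).const_mul β)
      refine this.congr_deriv ?_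
      simp
    have hsq : HasDerivAt (fun t => Real.sqrt (ρ t)) (-β / (2 * r)) 0 := by
      have := hρ.sqrt (by rw [hρ0]; positivity)
      rwa [hρ0, Real.sqrt_sq hr.le] at this
    refine hT (fun t => P + (Real.sqrt (ρ t) • e1 + t • (e2 + a • e3))) _ ?_ ?_ ?_
    · have := ((hsq.smul_const e1).add ((hasDerivAt_id (0:ℝ)).smul_const (e2 + a • e3))).const_add P
      simpa using this
    · simp [hρ0, Real.sqrt_sq hr.le]
    · have : ∀ᶠ t in nhds (0:ℝ), 0 < ρ t :=
        hρ.continuousAt.eventually (lt_mem_nhds (by rw [hρ0]; positivity))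
      filter_upwards [this] with t ht
      rw [hS, Real.sq_sqrt ht.le]
      simp only [ρ]; ring
  have he2 : e2 ∈ T := by
    obtain ⟨β, h, hβ⟩ := key 0 (by norm_num)
    have := (h 0 r).1 (by simpa using hC 0 r (by ring))
    have hb : β = 0 := by
      have : β * r = 0 := by linarith
      rcases mul_eq_zero.1 this with h | h
      · exact h
      · linarith
    simpa [hb] using hβ
  obtain ⟨β, h, hβ⟩ := key (1/2) (by norm_num)
  have hm : (-β / r) • e1 + e3 ∈ T := by
    have := T.smul_mem 2 (T.sub_mem hβ he2)
    convert this using 1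
    have : -β / r = 2 * (-β / (2 * r)) := by field_simp
    rw [this]; module
  set m := -β / r with hmdef
  have hm1 : ∀ s : ℝ, mink (s • e1 + e3) (s • e1 + e3) = s ^ 2 - 1 := by
    intro s
    simp only [mink_add_left, mink_add_right, mink_smul_left, mink_smul_right, h11, h33, h13, h31]
    ring
  have hz : mink (0 : E3) 0 = 0 := by simp [mink]
  refine ⟨m, ?_, ?_⟩
  · have hne : m • e1 + e3 ≠ 0 := by
      intro h0
      have : mink e3 (m • e1 + e3) = 0 := by rw [h0]; simp [mink]
      rw [mink_add_right, mink_smul_right, h31, h33] at this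
      norm_num at this
    have := hTpos _ hm hne
    rw [hm1] at this; linarith
  · intro a x y ha hxy
    obtain ⟨β', h', hβ'⟩ := key a ha
    have hmem : (-β' / (2 * r) - a * m) • e1 ∈ T := by
      have := T.sub_mem (T.sub_mem hβ' he2) (T.smul_mem a hm)
      convert this using 1
      module
    have hcoef : -β' / (2 * r) - a * m = 0 := by
      by_contra hne
      have he1 : e1 ∈ T := by
        have := T.smul_mem (-β' / (2 * r) - a * m)⁻¹ hmem
        rwa [smul_smul, inv_mul_cancel₀ hne, one_smul] at this
      have he3 : e3 ∈ T := by
        have := T.sub_mem hm (T.smul_mem m he1)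
        simpa using this
      have hne3 : e3 ≠ 0 := by
        intro h0; rw [h0, hz] at h33; norm_num at h33
      have := hTpos _ he3 hne3
      linarith
    have hb : β' = -2 * r * a * m := by
      field_simp at hcoef
      linarith
    rw [h', hb]
    linarith

theorem root_aux (m : ℝ) (hm : 1 < m ^ 2) : ∃ s : ℝ, s ^ 2 + 2 * m * s + 1 = 0 ∧ s ^ 2 < 1 := by
  have h1 := Real.sq_sqrt (show 0 ≤ m ^ 2 - 1 by linarith)
  have h2 := Real.sqrt_pos.2 (show 0 < m ^ 2 - 1 by linarith)
  generalize Real.sqrt (m ^ 2 - 1) = d at *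
  rcases lt_or_gt_of_ne (show m ≠ 0 by rintro rfl; norm_num at hm) with h | h
  · refine ⟨-m - d, by nlinarith, ?_⟩
    have : 1 < -m := by nlinarith
    nlinarith
  · refine ⟨-m + d, by nlinarith, ?_⟩
    have : 1 < m := by nlinarith
    nlinarith

/-- For a nonempty connected spacelike regular surface `S` with property 𝒫*,
if a spacelike plane `Pl₀` meets `S` in a non-degenerate circle with center `P`, then the
line through `P` Minkowski-orthogonal to `Pl₀` meets `S`. -/
theorem axis_meets_surface (S : Set E3) (hne : S.Nonempty) (hconn : IsConnected S)
    (hreg : IsSpacelikeSurface S) (hP : PropertyPStar S)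
    (Pl₀ : AffineSubspace ℝ E3) (hPl₀ : IsSpacelikePlane Pl₀)
    (P : E3) (r : ℝ) (hr : 0 < r)
    (hC : IsMCircleIn Pl₀ P r ((Pl₀ : Set E3) ∩ S))
    (L : AffineSubspace ℝ E3) (hL : IsLine L) (hPL : P ∈ L)
    (horth : ∀ v ∈ L.direction, ∀ w ∈ Pl₀.direction, mink v w = 0) :
    ((L : Set E3) ∩ S).Nonempty := by
  obtain ⟨e1, e2, e3, he1, he2, he3, h11, h22, h33, h12, h13, h23⟩ :=
    frame_aux Pl₀.direction L.direction hPl₀.1 hPl₀.2 hL horth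
  have hC' : ∀ x y : ℝ, x ^ 2 + y ^ 2 = r ^ 2 → P + (x • e1 + y • e2) ∈ S := by
    intro x y hxy
    have : P + (x • e1 + y • e2) ∈ (Pl₀ : Set E3) ∩ S := by
      rw [hC.2.2]
      refine ⟨?_, ?_⟩
      · have := AffineSubspace.vadd_mem_of_mem_direction (Pl₀.direction.add_mem
          (Pl₀.direction.smul_mem x he1) (Pl₀.direction.smul_mem y he2)) hC.1
        rwa [vadd_eq_add, add_comm] at this
      · rw [add_sub_cancel_left, mink_comb2 e1 e2 1 h11 h12 h22]; linarith
    exact this.2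
  obtain ⟨m, hm, hreg'⟩ := region_aux S hreg hP P e1 e2 e3 r hr h11 h22 h33 h12 h13 h23 hC'
  obtain ⟨s, hs, hs1⟩ := root_aux m hm
  refine ⟨P + (r * s) • e3, ?_, ?_⟩
  · have := AffineSubspace.vadd_mem_of_mem_direction (L.direction.smul_mem (r * s) he3) hPL
    rwa [vadd_eq_add, add_comm] at this
  have h32 : mink e3 e2 = 0 := by rw [mink_comm]; exact h23
  have hww : mink (e2 + (-s) • e3) (e2 + (-s) • e3) = 1 - s ^ 2 := by
    simp only [mink_add_left, mink_add_right, mink_smul_left, mink_smul_right, h22, h33, h23, h32]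
    ring
  have huw : mink e1 (e2 + (-s) • e3) = 0 := by
    rw [mink_add_right, mink_smul_right, h12, h13]; ring
  have hq3 : P + (r * s) • e3 + ((0:ℝ) • e1 + r • (e2 + (-s) • e3)) ∈ S := by
    convert hC' 0 r (by ring) using 1
    module
  obtain ⟨α, β, γ, h⟩ := circle_eq S hP (P + (r * s) • e3) e1 (e2 + (-s) • e3) (1 - s ^ 2)
    (by linarith) h11 huw hww 0 r hq3
  have hpt : ∀ x : ℝ, x ^ 2 = 3 * r ^ 2 * (1 - s ^ 2) / 16 →
      P + (r * s) • e3 + (x • e1 + (3 * r / 4) • (e2 + (-s) • e3)) ∈ S := by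
    intro x hx
    have := hreg' (s / 3) x (3 * r / 4) (by nlinarith) (by
      have : m * s = -(s ^ 2 + 1) / 2 := by linarith
      have h2 : 2 * r * m * (s / 3) * (3 * r / 4) = r ^ 2 / 2 * (m * s) := by ring
      rw [h2, this, hx]; ring)
    convert this using 1
    module
  set x1 := Real.sqrt (3 * r ^ 2 * (1 - s ^ 2) / 16) with hx1
  have hx1sq : x1 ^ 2 = 3 * r ^ 2 * (1 - s ^ 2) / 16 := by
    rw [hx1, Real.sq_sqrt]
    have : 0 < 1 - s ^ 2 := by linarith
    positivity
  have a1 := (h _ _).1 hq3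
  have a2 := (h _ _).1 (hpt x1 hx1sq)
  have a3 := (h _ _).1 (hpt (-x1) (by rw [neg_sq]; exact hx1sq))
  have hγ : γ = 0 := by nlinarith
  have := (h 0 0).2 (by rw [hγ]; ring)
  simpa using this
end
end

section
/- Let S be a nonempty connected spacelike regular surface in Minkowski space 𝕃³ satisfying property 𝒫*. Then for every point A ∈ S there exists a spacelike plane Π such that Π ∩ S is a non-degenerate circle containing A. -/
noncomputable section

open Module
open scoped RealInnerProductSpace

/-- A functional transverse to a chart at `u0` vanishes (relative to `f u0`) at another point. -/
lemma exists_other_zero (f : E2 → E3) (U : Set E2) (hU : IsOpen U) (hf : ContDiffOn ℝ (⊤ : ℕ∞) f U)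
    (u0 : E2) (hu0 : u0 ∈ U) (l : E3 →L[ℝ] ℝ) (v : E2) (hv : 0 < l (fderiv ℝ f u0 v)) :
    ∃ u ∈ U, u ≠ u0 ∧ l (f u - f u0) = 0 := by
  have hd : HasFDerivAt f (fderiv ℝ f u0) u0 :=
    ((hf.contDiffAt (hU.mem_nhds hu0)).differentiableAt (by simp)).hasFDerivAt
  have hline : HasDerivAt (fun t : ℝ => u0 + t • v) v 0 := by
    simpa using ((hasDerivAt_id (0:ℝ)).smul_const v).const_add u0
  have hd' : HasFDerivAt f (fderiv ℝ f u0) ((fun t : ℝ => u0 + t • v) 0) := by simpa using hd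
  have hh : HasDerivAt (fun t : ℝ => l (f (u0 + t • v) - f u0)) (l (fderiv ℝ f u0 v)) 0 :=
    l.hasFDerivAt.comp_hasDerivAt 0 ((hd'.comp_hasDerivAt 0 hline).sub_const (f u0))
  have hs := (hasDerivAt_iff_tendsto_slope.1 hh).eventually (lt_mem_nhds hv)
  rw [eventually_nhdsWithin_iff, Metric.eventually_nhds_iff] at hs
  obtain ⟨e, he, hs⟩ := hs
  obtain ⟨R, hR, hball⟩ := Metric.isOpen_iff.1 hU u0 hu0
  have hv0 : v ≠ 0 := by
    rintro rfl
    simp at hv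
  have hvn : 0 < ‖v‖ := norm_pos_iff.2 hv0
  obtain ⟨d, hd0, hdl⟩ := exists_between (lt_min he (div_pos hR hvn))
  have hde : d < e := lt_of_lt_of_le hdl (min_le_left _ _)
  have hdR : d * ‖v‖ < R := (lt_div_iff₀ hvn).1 (lt_of_lt_of_le hdl (min_le_right _ _))
  have h1 := hs (y := d) (by simpa [abs_of_pos hd0] using hde) (by simpa using hd0.ne')
  have h2 := hs (y := -d) (by simpa [abs_of_pos hd0] using hde) (by simpa using hd0.ne')
  simp only [slope_def_field, zero_smul, add_zero, sub_self, map_zero, sub_zero] at h1 h2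
  have h1' : 0 ≤ l (f (u0 + d • v) - f u0) := by
    by_contra hc
    exact absurd h1 (not_lt.2 (div_nonpos_of_nonpos_of_nonneg (not_le.1 hc).le hd0.le))
  have h2' : l (f (u0 + (-d) • v) - f u0) ≤ 0 := by
    by_contra hc
    exact absurd h2 (not_lt.2 (div_nonpos_of_nonneg_of_nonpos (not_le.1 hc).le (by linarith)))
  have hrank : 1 < Module.rank ℝ E2 := by
    rw [← Module.finrank_eq_rank]
    simp
  have hsub : Metric.sphere u0 (d * ‖v‖) ⊆ U := fun x hx => hball (by
    rw [Metric.mem_sphere] at hx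
    rw [Metric.mem_ball, hx]; exact hdR)
  have hcont : ContinuousOn (fun u => l (f u - f u0)) (Metric.sphere u0 (d * ‖v‖)) :=
    l.continuous.comp_continuousOn ((hf.continuousOn.mono hsub).sub continuousOn_const)
  obtain ⟨u, hu, hu'⟩ := (isPreconnected_sphere hrank u0 (d * ‖v‖)).intermediate_value
    (a := u0 + (-d) • v) (b := u0 + d • v)
    (by simp [norm_smul, abs_of_pos hd0]) (by simp [norm_smul, abs_of_pos hd0]) hcont ⟨h2', h1'⟩
  refine ⟨u, hsub hu, ?_, hu'⟩
  rintro rfl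
  rw [Metric.mem_sphere, dist_self] at hu
  exact (mul_pos hd0 hvn).ne hu

lemma circle_of_functional (S : Set E3) (hP : PropertyPStar S) (A : E3) (hA : A ∈ S)
    (f : E2 → E3) (U : Set E2) (hc : IsChartAt S A f U) (u0 : E2) (hu0 : u0 ∈ U) (hfu : f u0 = A)
    (l : E3 →L[ℝ] ℝ) (hl : ∀ v, l v = 0 → v ≠ 0 → 0 < mink v v)
    (v : E2) (hv : l (fderiv ℝ f u0 v) ≠ 0) :
    ∃ Pl : AffineSubspace ℝ E3, IsSpacelikePlane Pl ∧
      ∃ (c : E3) (r : ℝ), 0 < r ∧ IsMCircleIn Pl c r ((Pl : Set E3) ∩ S) ∧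
        A ∈ (Pl : Set E3) ∩ S := by
  obtain ⟨hU, hf, -, -, ⟨W, -, hW⟩, ⟨φ, hφ⟩⟩ := hc
  have key : ∃ u ∈ U, u ≠ u0 ∧ l (f u - f u0) = 0 := by
    rcases lt_or_gt_of_ne hv with h | h
    · exact exists_other_zero f U hU hf u0 hu0 l (-v) (by simpa using h)
    · exact exists_other_zero f U hU hf u0 hu0 l v h
  obtain ⟨u, hu, hne, hlu⟩ := key
  have hfne : f u ≠ A := by
    intro h
    have : φ ⟨u, hu⟩ = φ ⟨u0, hu0⟩ := Subtype.ext (by rw [hφ, hφ]; exact h.trans hfu.symm)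
    exact hne (congrArg Subtype.val (φ.injective this))
  have hfS : f u ∈ S := by
    have : f u ∈ W ∩ S := hW ▸ Set.mem_image_of_mem f hu
    exact this.2
  have hmem : ∀ x, x ∈ AffineSubspace.mk' A (LinearMap.ker (l : E3 →ₗ[ℝ] ℝ)) ↔ l (x - A) = 0 := by
    intro x
    rw [AffineSubspace.mem_mk']
    simp [LinearMap.mem_ker]
  have hsp : IsSpacelikePlane (AffineSubspace.mk' A (LinearMap.ker (l : E3 →ₗ[ℝ] ℝ))) := by
    refine ⟨?_, ?_⟩
    · unfold IsPlane
      rw [AffineSubspace.direction_mk']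
      have h1 := LinearMap.finrank_range_add_finrank_ker (l : E3 →ₗ[ℝ] ℝ)
      have h2 : LinearMap.range (l : E3 →ₗ[ℝ] ℝ) = ⊤ := by
        apply LinearMap.range_eq_top.2
        apply LinearMap.surjective
        intro h
        exact hv (by simpa using LinearMap.congr_fun h (fderiv ℝ f u0 v))
      rw [h2] at h1
      simp at h1
      omega
    · intro w hw
      rw [AffineSubspace.direction_mk'] at hw
      exact hl w hw
  have hAP : A ∈ AffineSubspace.mk' A (LinearMap.ker (l : E3 →ₗ[ℝ] ℝ)) :=
    AffineSubspace.self_mem_mk' _ _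
  have huP : f u ∈ AffineSubspace.mk' A (LinearMap.ker (l : E3 →ₗ[ℝ] ℝ)) := by
    rw [hmem, ← hfu]; exact hlu
  obtain ⟨c, r, hcirc⟩ := hP _ hsp ⟨A, hAP, hA⟩
  refine ⟨_, hsp, c, r, ?_, hcirc, hAP, hA⟩
  obtain ⟨hcP, hr, hset⟩ := hcirc
  rcases hr.lt_or_eq with h | h
  · exact h
  exfalso
  have hall : ∀ x ∈ AffineSubspace.mk' A (LinearMap.ker (l : E3 →ₗ[ℝ] ℝ)), x ∈ S → x = c := by
    intro x hx hxS
    have hx2 : x ∈ {x ∈ ((AffineSubspace.mk' A (LinearMap.ker (l : E3 →ₗ[ℝ] ℝ)) : AffineSubspace ℝ E3) : Set E3) |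
      mink (x - c) (x - c) = r ^ 2} := hset ▸ ⟨hx, hxS⟩
    by_contra hxc
    have hdir := hsp.2 (x - c) (AffineSubspace.vsub_mem_direction hx hcP) (sub_ne_zero.2 hxc)
    rw [hx2.2, ← h] at hdir
    simp at hdir
  exact hfne ((hall _ huP hfS).trans (hall _ hAP hA).symm)

/-- On a nonempty connected spacelike regular surface with property 𝒫*,
every point lies on a non-degenerate circle cut out by some spacelike plane. -/
theorem every_point_on_nondegenerate_circle (S : Set E3) (hne : S.Nonempty)
    (hconn : IsConnected S) (hreg : IsSpacelikeSurface S) (hP : PropertyPStar S) :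
    ∀ A ∈ S, ∃ Pl : AffineSubspace ℝ E3, IsSpacelikePlane Pl ∧
      ∃ (c : E3) (r : ℝ), 0 < r ∧ IsMCircleIn Pl c r ((Pl : Set E3) ∩ S) ∧
        A ∈ (Pl : Set E3) ∩ S := by
  intro A hA
  obtain ⟨f, U, hc, -⟩ := hreg A hA
  obtain ⟨u0, hu0, hfu⟩ := hc.2.2.2.1
  have hinj := hc.2.2.1 u0 hu0
  let p : Fin 3 → E3 →L[ℝ] ℝ := fun i => EuclideanSpace.proj i
  have hp : ∀ i x, p i x = x i := fun i x => rfl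
  have hpos : ∀ a b c : ℝ, c = 0 ∨ a = 2 * c → 0 ≤ a * a + b * b - c * c ∧
      (a * a + b * b - c * c = 0 → a = 0 ∧ b = 0 ∧ c = 0) := by
    rintro a b c (rfl | rfl)
    · refine ⟨by nlinarith, fun h => ⟨by nlinarith, by nlinarith, rfl⟩⟩
    · refine ⟨by nlinarith [sq_nonneg b, sq_nonneg c], fun h => ?_⟩
      have : c = 0 := by nlinarith [sq_nonneg b, sq_nonneg c]
      subst this
      refine ⟨by simp, by nlinarith, rfl⟩
  have hpos' : ∀ v : E3, v 2 = 0 ∨ v 0 = 2 * v 2 → v ≠ 0 → 0 < mink v v := by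
    intro v hv hv0
    obtain ⟨h1, h2⟩ := hpos (v 0) (v 1) (v 2) hv
    refine lt_of_le_of_ne h1 fun h => hv0 ?_
    obtain ⟨ha, hb, hc⟩ := h2 h.symm
    ext i
    fin_cases i <;> simpa
  by_cases h1 : ∃ v, p 2 (fderiv ℝ f u0 v) ≠ 0
  · obtain ⟨v, hv⟩ := h1
    exact circle_of_functional S hP A hA f U hc u0 hu0 hfu (p 2)
      (fun w hw => hpos' w (Or.inl hw)) v hv
  by_cases h2 : ∃ v, (p 0 - (2:ℝ) • p 2) (fderiv ℝ f u0 v) ≠ 0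
  · obtain ⟨v, hv⟩ := h2
    refine circle_of_functional S hP A hA f U hc u0 hu0 hfu _
      (fun w hw => hpos' w (Or.inr ?_)) v hv
    simp [hp] at hw
    linarith
  exfalso
  push Not at h1 h2
  have hker : LinearMap.ker (((p 1).comp (fderiv ℝ f u0) : E2 →L[ℝ] ℝ) : E2 →ₗ[ℝ] ℝ) ≠ ⊥ :=
    LinearMap.ker_ne_bot_of_finrank_lt (by simp)
  obtain ⟨w, hw, hw0⟩ := Submodule.exists_mem_ne_zero_of_ne_bot hker
  apply hw0
  apply hinj
  have ha := h1 w
  have hb := h2 w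
  have hc' : p 1 (fderiv ℝ f u0 w) = 0 := hw
  simp [hp] at ha hb hc'
  rw [map_zero]
  ext i
  fin_cases i
  · simp; linarith
  · simpa using hc'
  · simpa using ha
end
end
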